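/- arXiv:1108.5415 — 3 statements merged into one kernel-verified Lean document; each statement's English description precedes it below -/
import Mathlib

section
/- Fix C > 23 and set a = (2/11)(C + 18.25). Suppose n > max(4096, (2/11)C + 75/11) and n/log n > 6(2a−13)(a−7)/(2a−15). Let (X_t) be the Gibbs sampler on M_n started from an arbitrary deterministic point X_0 = x ∈ M_n. Then for every integer T > C·n·log n, ‖L(X_T) − U_n‖_TV ≤ 11·n^{−C/11 + 19/44}. -/
open MeasureTheory

noncomputable section

/-- Uniform probability measure on a finset. -/
def unifOn {α : Type*} [MeasurableSpace α] (s : Finset α) : Measure α :=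
  (s.card : ENNReal)⁻¹ • ∑ a ∈ s, Measure.dirac a

/-- Total variation distance between two measures. -/
def tvDist {α : Type*} [MeasurableSpace α] (μ ν : Measure α) : ℝ :=
  ⨆ A : {A : Set α // MeasurableSet A}, ((μ A).toReal - (ν A).toReal)

/-- The set `M_n` of nonnegative `n × 2` matrices with row sums `2` and column sums `n`. -/
def MSet (n : ℕ) : Set (Fin n × Fin 2 → ℝ) :=
  {x | (∀ p, 0 ≤ x p) ∧ (∀ i : Fin n, x (i, 0) + x (i, 1) = 2) ∧
    (∀ j : Fin 2, ∑ i : Fin n, x (i, j) = n)}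

/-- The uniform (normalized `(n-1)`-dimensional Hausdorff) measure on `M_n`. -/
def UM (n : ℕ) : Measure (Fin n × Fin 2 → ℝ) :=
  (μH[(n : ℝ) - 1] (MSet n))⁻¹ • (μH[(n : ℝ) - 1]).restrict (MSet n)

/-- One step of the Gibbs sampler on `M_n`, updating the pair of rows `u.1 = (i, j)`
using the uniform variable `u.2 = λ`. -/
def stepM (n : ℕ) (x : Fin n × Fin 2 → ℝ) (u : (Fin n × Fin n) × ℝ) :
    Fin n × Fin 2 → ℝ := fun p =>
  let i := u.1.1
  let j := u.1.2
  let l := u.2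
  let d := 2 - x (i, 0) - x (j, 0)
  if p = (i, 0) then (if 0 ≤ d then l * (2 - d) else 2 * l - (1 - l) * d)
  else if p = (j, 0) then (if 0 ≤ d then (1 - l) * (2 - d) else 2 * (1 - l) - l * d)
  else if p = (i, 1) then (if 0 ≤ d then 2 * (1 - l) + l * d else (1 - l) * (2 + d))
  else if p = (j, 1) then (if 0 ≤ d then 2 * l + (1 - l) * d else l * (2 + d))
  else x p

/-- The set of ordered pairs `(i, j)` with `i < j`. -/
def pairsF (n : ℕ) : Finset (Fin n × Fin n) := Finset.univ.filter fun p => p.1 < p.2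

/-- Law of the random update datum: `(i, j)` uniform among pairs `i < j`, and
`λ` uniform on `[0,1]`. -/
def driveM (n : ℕ) : Measure ((Fin n × Fin n) × ℝ) :=
  (unifOn (pairsF n)).prod ((volume : Measure ℝ).restrict (Set.Icc 0 1))

/-- Law of the Gibbs sampler on `M_n` after `T` steps started at `x`. -/
def lawM (n : ℕ) (x : Fin n × Fin 2 → ℝ) (T : ℕ) : Measure (Fin n × Fin 2 → ℝ) :=
  Measure.map (fun ω : Fin T → (Fin n × Fin n) × ℝ => (List.ofFn ω).foldl (stepM n) x)
    (Measure.pi fun _ => driveM n)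

/-- Law of the `(T+1)`-step path of the Gibbs sampler on `M_n` with initial distribution `μ`. -/
def pathM (n T : ℕ) (μ : Measure (Fin n × Fin 2 → ℝ)) :
    Measure (Fin (T + 1) → Fin n × Fin 2 → ℝ) :=
  Measure.map (fun p : (Fin n × Fin 2 → ℝ) × (Fin T → (Fin n × Fin n) × ℝ) =>
      fun s : Fin (T + 1) => ((List.ofFn p.2).take s).foldl (stepM n) p.1)
    (μ.prod (Measure.pi fun _ => driveM n))



/-! ### Vector version of the chain -/

/-- lower end of the interval of admissible values. -/
def loI (s : ℝ) : ℝ := max 0 (s - 2)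
/-- upper end of the interval of admissible values. -/
def hiI (s : ℝ) : ℝ := min 2 s

/-- Update of a vector (first column). -/
def upd {n : ℕ} (x : Fin n → ℝ) (i j : Fin n) (l : ℝ) : Fin n → ℝ := fun k =>
  if k = i then loI (x i + x j) + l * (hiI (x i + x j) - loI (x i + x j))
  else if k = j then hiI (x i + x j) - l * (hiI (x i + x j) - loI (x i + x j))
  else x k

/-- Matrix with given first column. -/
def Phi {n : ℕ} (x : Fin n → ℝ) : Fin n × Fin 2 → ℝ := fun p => if p.2 = 0 then x p.1 else 2 - x p.1

/-- Vector version of `MSet`. -/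
def SV (n : ℕ) : Set (Fin n → ℝ) := {x | (∀ i, 0 ≤ x i ∧ x i ≤ 2) ∧ ∑ i, x i = n}

lemma lo_add_hi (s : ℝ) : loI s + hiI s = s := by
  unfold loI hiI
  rcases le_total s 2 with h | h
  · rw [max_eq_left (by linarith), min_eq_right h]; ring
  · rw [max_eq_right (by linarith), min_eq_left h]; ring

lemma lo_nonneg (s : ℝ) : 0 ≤ loI s := le_max_left _ _
lemma hi_le_two (s : ℝ) : hiI s ≤ 2 := min_le_left _ _

lemma lo_le_hi {s : ℝ} (h0 : 0 ≤ s) (h4 : s ≤ 4) : loI s ≤ hiI s := by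
  unfold loI hiI
  rcases le_total s 2 with h | h
  · rw [max_eq_left (by linarith), min_eq_right h]; linarith
  · rw [max_eq_right (by linarith), min_eq_left h]; linarith

lemma lo_mono {s t : ℝ} (h : s ≤ t) : loI s ≤ loI t := max_le_max le_rfl (by linarith)
lemma hi_mono {s t : ℝ} (h : s ≤ t) : hiI s ≤ hiI t := min_le_min le_rfl h

lemma stepM_Phi {n : ℕ} (x : Fin n → ℝ) (i j : Fin n) (hij : i ≠ j) (l : ℝ) :
    stepM n (Phi x) ((i, j), l) = Phi (upd x i j l) := by
  funext p
  obtain ⟨k, c⟩ := p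
  have hji : j ≠ i := hij.symm
  have key : (0 ≤ 2 - x i - x j ∧ loI (x i + x j) = 0 ∧ hiI (x i + x j) = x i + x j) ∨
      (¬ (0 ≤ 2 - x i - x j) ∧ loI (x i + x j) = x i + x j - 2 ∧ hiI (x i + x j) = 2) := by
    unfold loI hiI
    by_cases h : 0 ≤ 2 - x i - x j
    · left; exact ⟨h, max_eq_left (by linarith), min_eq_right (by linarith)⟩
    · right; exact ⟨h, max_eq_right (by linarith), min_eq_left (by linarith)⟩
  by_cases hki : k = i
  · subst hki
    rcases key with ⟨h, h1, h2⟩ | ⟨h, h1, h2⟩ <;>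
    fin_cases c <;> simp [stepM, Phi, upd, h1, h2, h, hij, hji] <;> ring_nf <;> simp
  · by_cases hkj : k = j
    · subst hkj
      rcases key with ⟨h, h1, h2⟩ | ⟨h, h1, h2⟩ <;>
      fin_cases c <;> simp [stepM, Phi, upd, h1, h2, h, hij, hji] <;> ring_nf <;> simp
    · fin_cases c <;> simp [stepM, Phi, upd, hki, hkj]

lemma upd_swap {n : ℕ} (x : Fin n → ℝ) (i j : Fin n) (hij : i ≠ j) (l : ℝ) :
    upd x j i (1 - l) = upd x i j l := by
  funext k
  unfold upd
  rw [add_comm (x j) (x i)]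
  by_cases hki : k = i
  · subst hki; simp [hij]; ring
  · by_cases hkj : k = j
    · subst hkj; simp [hki]; ring
    · simp [hki, hkj]

lemma measurable_loI : Measurable loI := by unfold loI; fun_prop
lemma measurable_hiI : Measurable hiI := by unfold hiI; fun_prop

lemma measurable_upd {n : ℕ} (i j : Fin n) :
    Measurable fun p : (Fin n → ℝ) × ℝ => upd p.1 i j p.2 := by
  refine measurable_pi_lambda _ fun k => ?_
  unfold upd
  have h1 := measurable_loI
  have h2 := measurable_hiI
  by_cases hki : k = i
  · simp only [hki, if_true]; fun_prop
  · by_cases hkj : k = j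
    · simp only [hkj, if_true]
      split_ifs <;> fun_prop
    · simp only [hki, hkj, if_false]; fun_prop

lemma sum_pair {n : ℕ} (i j : Fin n) (hij : i ≠ j) (g : Fin n → ℝ) :
    ∑ k, g k = g i + g j + ∑ k ∈ (Finset.univ.erase i).erase j, g k := by
  rw [← Finset.add_sum_erase Finset.univ g (Finset.mem_univ i),
    ← Finset.add_sum_erase (Finset.univ.erase i) g (by simp [hij.symm] : j ∈ Finset.univ.erase i)]
  ring

lemma upd_i {n : ℕ} (x : Fin n → ℝ) (i j : Fin n) (l : ℝ) :
    upd x i j l i = loI (x i + x j) + l * (hiI (x i + x j) - loI (x i + x j)) := by simp [upd]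
lemma upd_j {n : ℕ} (x : Fin n → ℝ) (i j : Fin n) (hij : i ≠ j) (l : ℝ) :
    upd x i j l j = hiI (x i + x j) - l * (hiI (x i + x j) - loI (x i + x j)) := by
  simp [upd, hij.symm]
lemma upd_k {n : ℕ} (x : Fin n → ℝ) (i j k : Fin n) (hki : k ≠ i) (hkj : k ≠ j) (l : ℝ) :
    upd x i j l k = x k := by simp [upd, hki, hkj]

/-- Sums of a functional comparison of two updated vectors. -/
lemma sum_upd {n : ℕ} (i j : Fin n) (hij : i ≠ j) (x y : Fin n → ℝ) (l m : ℝ)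
    (F : ℝ → ℝ → ℝ) :
    ∑ k, F (upd x i j l k) (upd y i j m k) =
      F (upd x i j l i) (upd y i j m i) + F (upd x i j l j) (upd y i j m j)
        + (∑ k, F (x k) (y k) - F (x i) (y i) - F (x j) (y j)) := by
  rw [sum_pair i j hij (fun k => F (upd x i j l k) (upd y i j m k)),
    sum_pair i j hij (fun k => F (x k) (y k))]
  have : ∑ k ∈ (Finset.univ.erase i).erase j, F (upd x i j l k) (upd y i j m k)
      = ∑ k ∈ (Finset.univ.erase i).erase j, F (x k) (y k) := by
    refine Finset.sum_congr rfl fun k hk => ?_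
    simp only [Finset.mem_erase, Finset.mem_univ, and_true] at hk
    rw [upd_k x i j k hk.2 hk.1, upd_k y i j k hk.2 hk.1]
  rw [this]; ring

lemma upd_mem {n : ℕ} {x : Fin n → ℝ} (hx : x ∈ SV n) (i j : Fin n) (hij : i ≠ j) {l : ℝ}
    (hl : l ∈ Set.Icc (0:ℝ) 1) : upd x i j l ∈ SV n := by
  obtain ⟨h1, h2⟩ := hx
  have hlh := lo_le_hi (s := x i + x j) (by linarith [(h1 i).1, (h1 j).1])
    (by linarith [(h1 i).2, (h1 j).2])
  have h0 := lo_nonneg (x i + x j)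
  have h3 := hi_le_two (x i + x j)
  refine ⟨fun k => ?_, ?_⟩
  · by_cases hki : k = i
    · subst hki; rw [upd_i]
      constructor <;> nlinarith [hl.1, hl.2]
    · by_cases hkj : k = j
      · subst hkj; rw [upd_j _ _ _ hij]
        constructor <;> nlinarith [hl.1, hl.2]
      · rw [upd_k x i j k hki hkj]; exact h1 k
  · have := sum_upd i j hij x x l l (fun a _ => a)
    rw [this, upd_i, upd_j _ _ _ hij, h2]
    linarith [lo_add_hi (x i + x j)]

/-- l1 distance. -/
def D1 {n : ℕ} (x y : Fin n → ℝ) : ℝ := ∑ k, |x k - y k|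
/-- squared l2 distance. -/
def D2 {n : ℕ} (x y : Fin n → ℝ) : ℝ := ∑ k, (x k - y k) ^ 2

lemma D1_nonneg {n : ℕ} (x y : Fin n → ℝ) : 0 ≤ D1 x y := Finset.sum_nonneg fun _ _ => abs_nonneg _
lemma D2_nonneg {n : ℕ} (x y : Fin n → ℝ) : 0 ≤ D2 x y := Finset.sum_nonneg fun _ _ => sq_nonneg _

/-- differences of ends have the same sign, and add up to the difference of sums. -/
lemma abs_lo_hi (s t : ℝ) : |loI s - loI t| + |hiI s - hiI t| = |s - t| := by
  have h1 := lo_add_hi s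
  have h2 := lo_add_hi t
  rcases le_total s t with h | h
  · rw [abs_of_nonpos (by linarith [lo_mono h]), abs_of_nonpos (by linarith [hi_mono h]),
      abs_of_nonpos (by linarith)]; linarith
  · rw [abs_of_nonneg (by linarith [lo_mono h]), abs_of_nonneg (by linarith [hi_mono h]),
      abs_of_nonneg (by linarith)]; linarith

lemma lo_hi_mul_nonneg (s t : ℝ) : 0 ≤ (loI s - loI t) * (hiI s - hiI t) := by
  rcases le_total s t with h | h
  · exact mul_nonneg_of_nonpos_of_nonpos (by linarith [lo_mono h]) (by linarith [hi_mono h])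
  · exact mul_nonneg (by linarith [lo_mono h]) (by linarith [hi_mono h])

lemma D1_upd_le {n : ℕ} (x y : Fin n → ℝ) (i j : Fin n) (hij : i ≠ j) {l : ℝ}
    (hl : l ∈ Set.Icc (0:ℝ) 1) : D1 (upd x i j l) (upd y i j l) ≤ D1 x y := by
  unfold D1
  have := sum_upd i j hij x y l l (fun a b => |a - b|)
  rw [this, upd_i, upd_i, upd_j _ _ _ hij, upd_j _ _ _ hij]
  have h := abs_lo_hi (x i + x j) (y i + y j)
  set a := loI (x i + x j); set b := hiI (x i + x j)
  set c := loI (y i + y j); set d := hiI (y i + y j)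
  have e1 : a + l * (b - a) - (c + l * (d - c)) = (1 - l) * (a - c) + l * (b - d) := by ring
  have e2 : b - l * (b - a) - (d - l * (d - c)) = (1 - l) * (b - d) + l * (a - c) := by ring
  rw [e1, e2]
  have h1 := abs_add_le ((1 - l) * (a - c)) (l * (b - d))
  have h2 := abs_add_le ((1 - l) * (b - d)) (l * (a - c))
  rw [abs_mul, abs_mul, abs_of_nonneg hl.1, abs_of_nonneg (by linarith [hl.2] : 0 ≤ 1 - l)] at h1 h2
  have h3 := abs_add_le (x i - y i) (x j - y j)
  have e3 : x i + x j - (y i + y j) = x i - y i + (x j - y j) := by ring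
  rw [e3] at h
  nlinarith

/-! ### Operators -/

/-- Kernel for a fixed pair. -/
def KK {n : ℕ} (e : Fin n × Fin n) (f : (Fin n → ℝ) → ENNReal) (x : Fin n → ℝ) : ENNReal :=
  ∫⁻ l in Set.Icc (0:ℝ) 1, f (upd x e.1 e.2 l)

/-- One step operator. -/
def PP (n : ℕ) (f : (Fin n → ℝ) → ENNReal) (x : Fin n → ℝ) : ENNReal :=
  ((pairsF n).card : ENNReal)⁻¹ * ∑ e ∈ pairsF n, KK e f x

lemma measurable_KK {n : ℕ} (e : Fin n × Fin n) {f : (Fin n → ℝ) → ENNReal} (hf : Measurable f) :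
    Measurable (KK e f) := by
  unfold KK
  exact Measurable.lintegral_prod_right' (f := fun p : (Fin n → ℝ) × ℝ => f (upd p.1 e.1 e.2 p.2))
    (hf.comp (measurable_upd e.1 e.2))

lemma measurable_PP {n : ℕ} {f : (Fin n → ℝ) → ENNReal} (hf : Measurable f) :
    Measurable (PP n f) := by
  unfold PP
  exact (Finset.measurable_fun_sum _ fun e _ => measurable_KK e hf).const_mul _

lemma measurable_PP_iter {n : ℕ} (T : ℕ) {f : (Fin n → ℝ) → ENNReal} (hf : Measurable f) :
    Measurable ((PP n)^[T] f) := by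
  induction T generalizing f with
  | zero => simpa using hf
  | succ T ih => rw [Function.iterate_succ_apply]; exact ih (measurable_PP hf)

lemma measurable_Phi {n : ℕ} : Measurable (Phi (n := n)) := by
  refine measurable_pi_lambda _ fun p => ?_
  unfold Phi
  split_ifs <;> fun_prop

lemma measurable_stepM (n : ℕ) :
    Measurable fun p : (Fin n × Fin 2 → ℝ) × ((Fin n × Fin n) × ℝ) => stepM n p.1 p.2 := by
  have h : Measurable fun q : (Fin n × Fin n) × ((Fin n × Fin 2 → ℝ) × ℝ) =>
      stepM n q.2.1 (q.1, q.2.2) := by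
    refine measurable_from_prod_countable_right fun e => ?_
    refine measurable_pi_lambda _ fun k => ?_
    have hm : Measurable fun q : (Fin n × Fin 2 → ℝ) × ℝ => 2 - q.1 (e.1, 0) - q.1 (e.2, 0) := by
      fun_prop
    have hs : MeasurableSet {q : (Fin n × Fin 2 → ℝ) × ℝ | 0 ≤ 2 - q.1 (e.1, 0) - q.1 (e.2, 0)} :=
      measurableSet_le measurable_const hm
    unfold stepM
    simp only
    by_cases h1 : k = (e.1, 0)
    · simp only [h1, if_true]
      exact Measurable.ite hs (by fun_prop) (by fun_prop)
    · simp only [h1, if_false]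
      by_cases h2 : k = (e.2, 0)
      · simp only [h2, if_true]
        exact Measurable.ite hs (by fun_prop) (by fun_prop)
      · simp only [h2, if_false]
        by_cases h3 : k = (e.1, 1)
        · simp only [h3, if_true]
          exact Measurable.ite hs (by fun_prop) (by fun_prop)
        · simp only [h3, if_false]
          by_cases h4 : k = (e.2, 1)
          · simp only [h4, if_true]
            exact Measurable.ite hs (by fun_prop) (by fun_prop)
          · simp only [h4, if_false]
            fun_prop
  exact h.comp (g := fun q : (Fin n × Fin n) × ((Fin n × Fin 2 → ℝ) × ℝ) =>
      stepM n q.2.1 (q.1, q.2.2))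
    (f := fun p : (Fin n × Fin 2 → ℝ) × ((Fin n × Fin n) × ℝ) => (p.2.1, (p.1, p.2.2)))
    (by fun_prop)

lemma measurable_foldl (n T : ℕ) :
    Measurable fun p : (Fin n × Fin 2 → ℝ) × (Fin T → (Fin n × Fin n) × ℝ) =>
      (List.ofFn p.2).foldl (stepM n) p.1 := by
  induction T with
  | zero => simpa using measurable_fst
  | succ T ih =>
    simp only [List.ofFn_succ, List.foldl_cons]
    have h1 : Measurable fun p : (Fin n × Fin 2 → ℝ) × (Fin (T+1) → (Fin n × Fin n) × ℝ) =>
        stepM n p.1 (p.2 0) :=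
      (measurable_stepM n).comp (measurable_fst.prodMk ((measurable_pi_apply 0).comp measurable_snd))
    have h2 : Measurable fun p : (Fin n × Fin 2 → ℝ) × (Fin (T+1) → (Fin n × Fin n) × ℝ) =>
        (fun i : Fin T => p.2 i.succ) :=
      measurable_pi_lambda _ fun i => (measurable_pi_apply _).comp measurable_snd
    exact ih.comp (h1.prodMk h2)

instance driveM_finite (n : ℕ) [NeZero (pairsF n).card] : IsFiniteMeasure (driveM n) := by
  have : IsFiniteMeasure (unifOn (pairsF n)) := by
    constructor
    unfold unifOn
    simp only [Measure.smul_apply, Measure.coe_finsetSum, Finset.sum_apply, measure_univ,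
      Finset.sum_const, smul_eq_mul, nsmul_eq_mul, mul_one]
    refine ENNReal.mul_lt_top ?_ (by simp)
    simp [NeZero.ne (pairsF n).card, pos_iff_ne_zero, NeZero.ne]
  unfold driveM
  infer_instance

lemma lintegral_driveM (n : ℕ) [NeZero (pairsF n).card] {g : (Fin n × Fin n) × ℝ → ENNReal}
    (hg : Measurable g) :
    ∫⁻ u, g u ∂driveM n =
      ((pairsF n).card : ENNReal)⁻¹ * ∑ e ∈ pairsF n, ∫⁻ l in Set.Icc (0:ℝ) 1, g (e, l) := by
  unfold driveM
  rw [lintegral_prod _ hg.aemeasurable, unifOn, lintegral_smul_measure,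
    lintegral_finsetSum_measure, smul_eq_mul]
  congr 1
  refine Finset.sum_congr rfl fun e _ => ?_
  rw [lintegral_dirac]

lemma lintegral_foldl (n T : ℕ) [NeZero (pairsF n).card] (x : Fin n → ℝ)
    {f : (Fin n × Fin 2 → ℝ) → ENNReal} (hf : Measurable f) :
    ∫⁻ ω, f ((List.ofFn ω).foldl (stepM n) (Phi x)) ∂(Measure.pi fun _ : Fin T => driveM n) =
      (PP n)^[T] (f ∘ Phi) x := by
  induction T generalizing x with
  | zero => simp
  | succ T ih =>
    have hmp := (measurePreserving_piFinSuccAbove (fun _ : Fin (T+1) => driveM n) 0)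
    have hG : Measurable fun p : ((Fin n × Fin n) × ℝ) × (Fin T → (Fin n × Fin n) × ℝ) =>
        f ((List.ofFn p.2).foldl (stepM n) (stepM n (Phi x) p.1)) := by
      refine hf.comp ?_
      refine (measurable_foldl n T).comp (Measurable.prodMk ?_ measurable_snd)
      exact (measurable_stepM n).comp (measurable_const.prodMk measurable_fst)
    have := hmp.lintegral_comp hG
    simp only [List.ofFn_succ, List.foldl_cons]
    have e0 : ∀ ω : Fin (T+1) → (Fin n × Fin n) × ℝ,
        f ((List.ofFn fun i : Fin T => ω i.succ).foldl (stepM n) (stepM n (Phi x) (ω 0))) =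
        (fun p : ((Fin n × Fin n) × ℝ) × (Fin T → (Fin n × Fin n) × ℝ) =>
        f ((List.ofFn p.2).foldl (stepM n) (stepM n (Phi x) p.1)))
        (MeasurableEquiv.piFinSuccAbove (fun _ => (Fin n × Fin n) × ℝ) 0 ω) := by
      intro ω
      simp [MeasurableEquiv.piFinSuccAbove, Fin.insertNthEquiv]
      rfl
    simp_rw [e0]
    rw [this, lintegral_prod _ hG.aemeasurable, lintegral_driveM n hG.lintegral_prod_right',
      Function.iterate_succ_apply', PP]
    congr 1
    refine Finset.sum_congr rfl fun e he => ?_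
    unfold KK
    refine lintegral_congr fun l => ?_
    simp only [pairsF, Finset.mem_filter, Finset.mem_univ, true_and] at he
    have := stepM_Phi x e.1 e.2 he.ne l
    rw [Prod.mk.eta] at this
    simp only [this]
    exact ih (upd x e.1 e.2 l)

lemma lintegral_lawM (n T : ℕ) [NeZero (pairsF n).card] (x : Fin n → ℝ)
    {f : (Fin n × Fin 2 → ℝ) → ENNReal} (hf : Measurable f) :
    ∫⁻ z, f z ∂(lawM n (Phi x) T) = (PP n)^[T] (f ∘ Phi) x := by
  unfold lawM
  rw [lintegral_map hf, lintegral_foldl n T x hf]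
  exact (measurable_foldl n T).comp (measurable_const.prodMk measurable_id)


/-! ### The uniform measure -/

lemma lintegral_affine (F : ℝ → ENNReal) (c b : ℝ) (hb : 0 < b) :
    ∫⁻ l in Set.Icc (0:ℝ) 1, F (c + l * b) = ENNReal.ofReal b⁻¹ * ∫⁻ t in Set.Icc c (c + b), F t := by
  have him : (fun l : ℝ => c + l * b) '' Set.Icc (0:ℝ) 1 = Set.Icc c (c + b) := by
    ext t
    simp only [Set.mem_image, Set.mem_Icc]
    constructor
    · rintro ⟨l, ⟨h0, h1⟩, rfl⟩
      constructor <;> nlinarith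
    · rintro ⟨h0, h1⟩
      refine ⟨(t - c) / b, ⟨div_nonneg (by linarith) hb.le, ?_⟩, by field_simp; ring⟩
      rw [div_le_one hb]; linarith
  have := lintegral_image_eq_lintegral_abs_deriv_mul (s := Set.Icc (0:ℝ) 1)
    (f := fun l : ℝ => c + l * b) (f' := fun _ => b) measurableSet_Icc
    (fun x _ => by
      have := ((hasDerivAt_id x).mul_const b).const_add c
      simpa using this.hasDerivWithinAt)
    (fun x _ y _ h => by
      have h' : c + x * b = c + y * b := h
      exact mul_right_cancel₀ hb.ne' (by linarith)) F
  rw [him] at this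
  rw [this, lintegral_const_mul' _ _ ENNReal.ofReal_ne_top, ← mul_assoc, ← ENNReal.ofReal_mul
    (by positivity), abs_of_pos hb, inv_mul_cancel₀ hb.ne', ENNReal.ofReal_one, one_mul]

lemma measurableSet_SV (n : ℕ) : MeasurableSet (SV n) := by
  have : SV n = (⋂ i, {x : Fin n → ℝ | 0 ≤ x i} ∩ {x | x i ≤ 2}) ∩ {x | ∑ i, x i = n} := by
    ext x; simp [SV, Set.mem_iInter]
  rw [this]
  refine MeasurableSet.inter (MeasurableSet.iInter fun i => ?_) ?_
  · exact (measurableSet_le measurable_const (measurable_pi_apply i)).inter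
      (measurableSet_le (measurable_pi_apply i) measurable_const)
  · exact measurableSet_eq_fun (by fun_prop) measurable_const

/-- length of the interval -/
def lenI {n : ℕ} (i j : Fin n) (x : Fin n → ℝ) : ℝ := hiI (x i + x j) - loI (x i + x j)

lemma measurable_lenI {n : ℕ} (i j : Fin n) : Measurable (lenI i j) := by
  unfold lenI
  have h1 := measurable_loI
  have h2 := measurable_hiI
  fun_prop

lemma lenI_nonneg {n : ℕ} (i j : Fin n) {x : Fin n → ℝ} (hx : x ∈ SV n) : 0 ≤ lenI i j x := by
  have := lo_le_hi (s := x i + x j) (by linarith [(hx.1 i).1, (hx.1 j).1])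
    (by linarith [(hx.1 i).2, (hx.1 j).2])
  unfold lenI; linarith

/-- direction -/
def vdir {n : ℕ} (i j : Fin n) : Fin n → ℝ := fun k => if k = i then 1 else if k = j then -1 else 0

lemma upd_eq_add {n : ℕ} (x : Fin n → ℝ) (i j : Fin n) (hij : i ≠ j) (l : ℝ) :
    upd x i j l = x + ((loI (x i + x j) - x i) + l * lenI i j x) • vdir i j := by
  funext k
  have h := lo_add_hi (x i + x j)
  by_cases hki : k = i
  · subst hki; simp [upd, vdir, lenI]; ring
  · by_cases hkj : k = j
    · subst hkj; simp [upd, vdir, lenI, hki]; linarith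
    · simp [upd, vdir, hki, hkj]

lemma add_dir_mem {n : ℕ} {x : Fin n → ℝ} (hx : x ∈ SV n) (i j : Fin n) (hij : i ≠ j) (t : ℝ) :
    x + t • vdir i j ∈ SV n ↔ t ∈ Set.Icc (loI (x i + x j) - x i) (hiI (x i + x j) - x i) := by
  have hs : ∑ k, (x + t • vdir i j) k = n := by
    rw [← hx.2]
    have : ∑ k, vdir i j k = 0 := by
      rw [sum_pair i j hij]
      have h0 : ∑ k ∈ (Finset.univ.erase i).erase j, vdir i j k = 0 := by
        refine Finset.sum_eq_zero fun k hk => ?_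
        simp only [Finset.mem_erase, Finset.mem_univ, and_true] at hk
        simp [vdir, hk.1, hk.2]
      rw [h0]; simp [vdir, hij.symm]
    simp only [Pi.add_apply, Pi.smul_apply, smul_eq_mul, Finset.sum_add_distrib, ← Finset.mul_sum]
    rw [this]; simp
  have h := lo_add_hi (x i + x j)
  have hlo : loI (x i + x j) = max 0 (x i + x j - 2) := rfl
  have hhi : hiI (x i + x j) = min 2 (x i + x j) := rfl
  constructor
  · intro hm
    have hi := hm.1 i
    have hj := hm.1 j
    simp [vdir, hij.symm] at hi hj
    rw [hlo, hhi]
    constructor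
    · rw [sub_le_iff_le_add]; exact max_le (by linarith) (by linarith)
    · rw [le_sub_iff_add_le]; exact le_min (by linarith) (by linarith)
  · rintro ⟨h1, h2⟩
    refine ⟨fun k => ?_, hs⟩
    have a1 := le_max_left 0 (x i + x j - 2)
    have a2 := le_max_right 0 (x i + x j - 2)
    have a3 := min_le_left 2 (x i + x j)
    have a4 := min_le_right 2 (x i + x j)
    rw [hlo] at h1
    rw [hhi] at h2
    by_cases hki : k = i
    · subst hki; simp [vdir]; constructor <;> linarith
    · by_cases hkj : k = j
      · subst hkj; simp [vdir, hki]; constructor <;> linarith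
      · simp [vdir, hki, hkj]; exact hx.1 k

lemma invariance {n : ℕ} (μ : Measure (Fin n → ℝ)) (hμ : μ (SV n) ≠ ⊤)
    (i j : Fin n) (hij : i ≠ j)
    (htr : ∀ (t : ℝ) (g : (Fin n → ℝ) → ENNReal), Measurable g →
      ∫⁻ x, g (x + t • vdir i j) ∂μ = ∫⁻ x, g x ∂μ)
    {f : (Fin n → ℝ) → ENNReal} (hf : Measurable f) :
    ∫⁻ x in SV n, KK (i, j) f x ∂μ = ∫⁻ x in SV n, f x ∂μ := by
  have hS := measurableSet_SV n
  have : IsFiniteMeasure (μ.restrict (SV n)) := ⟨by simpa using hμ.lt_top⟩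
  set S := SV n
  set Z : Set (Fin n → ℝ) := {x | lenI i j x = 0}
  have hlen := measurable_lenI i j
  have hZ : MeasurableSet Z := measurableSet_eq_fun hlen measurable_const
  set q : (Fin n → ℝ) → ENNReal := fun x => ENNReal.ofReal (lenI i j x)⁻¹
  have hq : Measurable q := hlen.inv.ennreal_ofReal
  have hSf : Measurable (S.indicator f) := hf.indicator hS
  have hS1 : Measurable (S.indicator (fun _ => (1:ENNReal))) := measurable_const.indicator hS
  have hadd : Measurable fun p : (Fin n → ℝ) × ℝ => p.1 + p.2 • vdir i j := by fun_prop
  have hsub : Measurable fun p : (Fin n → ℝ) × ℝ => p.1 + (-p.2) • vdir i j := by fun_prop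
  -- pointwise formula
  have hpt : ∀ x ∈ S, KK (i, j) f x =
      Z.indicator f x + ∫⁻ t : ℝ, q x * S.indicator f (x + t • vdir i j) := by
    intro x hx
    have hl0 := lenI_nonneg i j hx
    have hqt : q x ≠ ⊤ := ENNReal.ofReal_ne_top
    by_cases hz : lenI i j x = 0
    · have h1 : Z.indicator f x = f x := Set.indicator_of_mem (show x ∈ Z from hz) f
      have h2 : q x = 0 := by simp [q, hz]
      rw [h1, h2]
      simp only [zero_mul, lintegral_const, add_zero]
      unfold KK
      have hlo : loI (x i + x j) = x i := by
        have h := (add_dir_mem hx i j hij 0).1 (by simpa using hx)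
        have : hiI (x i + x j) - loI (x i + x j) = 0 := hz
        linarith [h.1, h.2]
      have : ∀ l, upd x i j l = x := by
        intro l; rw [upd_eq_add x i j hij, hz, hlo]; simp
      simp only [this]
      simp
    · have h1 : Z.indicator f x = 0 := Set.indicator_of_notMem (show x ∉ Z from hz) f
      rw [h1, zero_add, lintegral_const_mul' _ _ hqt]
      unfold KK
      simp only [upd_eq_add x i j hij]
      rw [lintegral_affine (fun t => f (x + t • vdir i j)) _ _ (lt_of_le_of_ne hl0 (Ne.symm hz))]
      congr 1
      rw [← lintegral_indicator measurableSet_Icc]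
      refine lintegral_congr fun t => ?_
      have e : loI (x i + x j) - x i + lenI i j x = hiI (x i + x j) - x i := by
        unfold lenI; ring
      rw [e]
      by_cases ht : x + t • vdir i j ∈ S
      · rw [Set.indicator_of_mem ht, Set.indicator_of_mem ((add_dir_mem hx i j hij t).1 ht)]
      · rw [Set.indicator_of_notMem ht,
          Set.indicator_of_notMem (fun h => ht ((add_dir_mem hx i j hij t).2 h))]
  rw [setLIntegral_congr_fun hS hpt, lintegral_add_left (hf.indicator hZ)]
  have hmeas1 : Measurable (Function.uncurry fun (x : Fin n → ℝ) (t : ℝ) =>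
      q x * S.indicator f (x + t • vdir i j)) :=
    (hq.comp measurable_fst).mul (hSf.comp hadd)
  have hmeas2 : Measurable (Function.uncurry fun (x : Fin n → ℝ) (t : ℝ) =>
      (q x * f x) * S.indicator (fun _ => (1:ENNReal)) (x + (-t) • vdir i j)) :=
    ((hq.mul hf).comp measurable_fst).mul (hS1.comp hsub)
  rw [lintegral_lintegral_swap hmeas1.aemeasurable]
  have hmid : ∀ t : ℝ, ∫⁻ x in S, q x * S.indicator f (x + t • vdir i j) ∂μ =
      ∫⁻ x in S, (q x * f x) * S.indicator (fun _ => (1:ENNReal)) (x + (-t) • vdir i j) ∂μ := by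
    intro t
    rw [← lintegral_indicator hS, ← lintegral_indicator hS]
    have hg : Measurable (S.indicator fun x => (q x * f x) *
        S.indicator (fun _ => (1:ENNReal)) (x + (-t) • vdir i j)) := by
      refine Measurable.indicator ?_ hS
      exact (hq.mul hf).mul (hS1.comp (by fun_prop))
    rw [← htr t _ hg]
    refine lintegral_congr fun x => ?_
    have e1 : x + t • vdir i j + (-t) • vdir i j = x := by
      rw [add_assoc, ← add_smul]; simp
    have eq : q (x + t • vdir i j) = q x := by
      have : (x + t • vdir i j) i + (x + t • vdir i j) j = x i + x j := by
        simp [vdir, hij.symm]; ring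
      simp only [q, lenI, this]
    by_cases hx : x ∈ S <;> by_cases hy : x + t • vdir i j ∈ S <;>
      simp only [Set.indicator, hx, hy, e1, eq, if_true, if_false, mul_zero, mul_one]
  simp_rw [hmid]
  rw [← lintegral_lintegral_swap hmeas2.aemeasurable, ← lintegral_add_left (hf.indicator hZ)]
  refine setLIntegral_congr_fun hS fun x hx => ?_
  have hl0 := lenI_nonneg i j hx
  have hin : ∫⁻ t : ℝ, S.indicator (fun _ => (1:ENNReal)) (x + (-t) • vdir i j) =
      ENNReal.ofReal (lenI i j x) := by
    have : ∀ t : ℝ, S.indicator (fun _ => (1:ENNReal)) (x + (-t) • vdir i j) =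
        (Set.Icc (x i - hiI (x i + x j)) (x i - loI (x i + x j))).indicator 1 t := by
      intro t
      have h := add_dir_mem hx i j hij (-t)
      have h' : (-t ∈ Set.Icc (loI (x i + x j) - x i) (hiI (x i + x j) - x i)) ↔
          t ∈ Set.Icc (x i - hiI (x i + x j)) (x i - loI (x i + x j)) := by
        simp only [Set.mem_Icc]
        constructor <;> rintro ⟨a, b⟩ <;> constructor <;> linarith
      by_cases ht : x + (-t) • vdir i j ∈ S
      · rw [Set.indicator_of_mem ht, Set.indicator_of_mem (h'.1 (h.1 ht))]; rfl
      · rw [Set.indicator_of_notMem ht, Set.indicator_of_notMem (fun hh => ht (h.2 (h'.2 hh)))]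
    simp_rw [this]
    rw [lintegral_indicator_one measurableSet_Icc, Real.volume_Icc]
    congr 1; unfold lenI; ring
  by_cases hz : lenI i j x = 0
  · rw [Set.indicator_of_mem (show x ∈ Z from hz)]
    have h2 : q x = 0 := by simp [q, hz]
    simp [h2]
  · rw [Set.indicator_of_notMem (show x ∉ Z from hz), zero_add,
      lintegral_const_mul _ (show Measurable fun t : ℝ =>
        S.indicator (fun _ => (1:ENNReal)) (x + (-t) • vdir i j) from hS1.comp (by fun_prop)), hin]
    have hp : 0 < lenI i j x := lt_of_le_of_ne hl0 (Ne.symm hz)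
    rw [mul_right_comm, ← ENNReal.ofReal_mul (by positivity), inv_mul_cancel₀ hz]
    simp


/-- Uniform measure on vectors. -/
def UV (n : ℕ) : Measure (Fin n → ℝ) :=
  (μH[(n : ℝ) - 1] (SV n))⁻¹ • (μH[(n : ℝ) - 1]).restrict (SV n)

lemma isometry_Phi {n : ℕ} : Isometry (Phi (n := n)) := by
  refine Isometry.of_dist_eq fun x y => le_antisymm ?_ ?_
  · refine (dist_pi_le_iff dist_nonneg).2 fun p => ?_
    unfold Phi
    split_ifs
    · exact dist_le_pi_dist x y p.1
    · have := dist_le_pi_dist x y p.1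
      rw [Real.dist_eq] at this ⊢
      rw [abs_sub_comm] at this
      convert this using 2; ring
  · refine (dist_pi_le_iff dist_nonneg).2 fun i => ?_
    have := dist_le_pi_dist (Phi x) (Phi y) (i, 0)
    simpa [Phi] using this

lemma Phi_mem {n : ℕ} (x : Fin n → ℝ) : Phi x ∈ MSet n ↔ x ∈ SV n := by
  constructor
  · rintro ⟨h1, h2, h3⟩
    refine ⟨fun i => ⟨by simpa [Phi] using h1 (i, 0), by simpa [Phi] using h1 (i, 1)⟩, ?_⟩
    simpa [Phi] using h3 0
  · rintro ⟨h1, h2⟩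
    refine ⟨fun p => ?_, fun i => ?_, fun j => ?_⟩
    · unfold Phi; split_ifs
      · exact (h1 _).1
      · linarith [(h1 p.1).2]
    · simp [Phi]
    · fin_cases j
      · simpa [Phi] using h2
      · simp [Phi, Finset.sum_sub_distrib, h2]; ring

lemma Phi_col {n : ℕ} {z : Fin n × Fin 2 → ℝ} (hz : z ∈ MSet n) : Phi (fun i => z (i, 0)) = z := by
  funext p
  obtain ⟨i, c⟩ := p
  have := hz.2.1 i
  fin_cases c
  · simp [Phi]
  · simp [Phi]; linarith

lemma map_Phi_UV {n : ℕ} (hn : 1 ≤ n) : Measure.map Phi (UV n) = UM n := by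
  have hd : (0:ℝ) ≤ (n:ℝ) - 1 := by
    have : (1:ℝ) ≤ n := by exact_mod_cast hn
    linarith
  have hpre : Phi ⁻¹' (MSet n) = SV n := by ext x; exact Phi_mem x
  have himg : Phi '' (SV n) = MSet n := by
    ext z; constructor
    · rintro ⟨x, hx, rfl⟩; exact (Phi_mem x).2 hx
    · intro hz
      refine ⟨fun i => z (i, 0), ?_, Phi_col hz⟩
      rw [← Phi_mem, Phi_col hz]; exact hz
  have hM : MeasurableSet (MSet n) := by
    rw [← himg]
    exact (isometry_Phi.isClosedEmbedding.measurableEmbedding).measurableSet_image.2 (measurableSet_SV n)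
  have hmeas : μH[(n:ℝ) - 1] (MSet n) = μH[(n:ℝ) - 1] (SV n) := by
    rw [← himg, isometry_Phi.hausdorffMeasure_image (Or.inl hd)]
  unfold UV UM
  rw [Measure.map_smul, hmeas, ← hpre,
    ← Measure.restrict_map measurable_Phi hM, isometry_Phi.map_hausdorffMeasure (Or.inl hd),
    Measure.restrict_restrict hM]
  have hInt0 : MSet n ∩ Set.range Phi = MSet n := by
    rw [Set.inter_eq_left, ← himg]
    exact Set.image_subset_range _ _
  rw [hInt0, hpre]

lemma hausdorff_SV_lt_top (m : ℕ) : μH[((m+1 : ℕ) : ℝ) - 1] (SV (m+1)) ≠ ⊤ := by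
  have hd : ((m+1 : ℕ) : ℝ) - 1 = (Fintype.card (Fin m) : ℝ) := by simp
  rw [hd]
  set ψ : (Fin m → ℝ) → (Fin (m+1) → ℝ) := fun z => Fin.cons ((m+1 : ℕ) - ∑ i, z i) z
  have hψ : LipschitzWith (m + 1 : NNReal) ψ := by
    refine LipschitzWith.of_dist_le_mul fun x y => ?_
    have hnn : (0:ℝ) ≤ ((m + 1 : NNReal) : ℝ) * dist x y := by positivity
    refine (dist_pi_le_iff hnn).2 fun k => ?_
    refine Fin.cases ?_ (fun i => ?_) k
    · simp only [ψ, Fin.cons_zero, Real.dist_eq]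
      have e : ((m+1 : ℕ) : ℝ) - ∑ i, x i - ((m+1 : ℕ) - ∑ i, y i) = ∑ i, (y i - x i) := by
        rw [Finset.sum_sub_distrib]; ring
      rw [e]
      calc |∑ i, (y i - x i)| ≤ ∑ i, |y i - x i| := Finset.abs_sum_le_sum_abs _ _
        _ ≤ ∑ _i : Fin m, dist x y := Finset.sum_le_sum fun i _ => by
            have := dist_le_pi_dist x y i
            rwa [Real.dist_eq, abs_sub_comm] at this
        _ = m * dist x y := by simp
        _ ≤ _ := by
          have : (0:ℝ) ≤ dist x y := dist_nonneg
          push_cast; nlinarith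
    · simp only [ψ, Fin.cons_succ]
      have h1 := dist_le_pi_dist x y i
      have : (0:ℝ) ≤ dist x y := dist_nonneg
      have hm : (0:ℝ) ≤ (m:ℝ) := by positivity
      push_cast; nlinarith
  have hsub : SV (m+1) ⊆ ψ '' (Set.Icc (fun _ => 0) (fun _ => 2)) := by
    rintro x ⟨h1, h2⟩
    refine ⟨fun i => x i.succ, ⟨fun i => (h1 _).1, fun i => (h1 _).2⟩, ?_⟩
    rw [Fin.sum_univ_succ] at h2
    funext k
    refine Fin.cases ?_ (fun i => ?_) k
    · simp only [ψ, Fin.cons_zero]; linarith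
    · simp [ψ]
  refine ne_top_of_le_ne_top ?_ (measure_mono hsub)
  refine ne_top_of_le_ne_top ?_ (hψ.hausdorffMeasure_image_le (by positivity) _)
  rw [hausdorffMeasure_pi_real]
  refine ENNReal.mul_ne_top ?_ ?_
  · exact ENNReal.rpow_ne_top_of_nonneg (by positivity) ENNReal.coe_ne_top
  · rw [Real.volume_Icc_pi]
    exact ENNReal.prod_ne_top fun _ _ => ENNReal.ofReal_ne_top

lemma hausdorff_SV_pos (m : ℕ) : μH[((m+1 : ℕ) : ℝ) - 1] (SV (m+1)) ≠ 0 := by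
  have hd : ((m+1 : ℕ) : ℝ) - 1 = (Fintype.card (Fin m) : ℝ) := by simp
  rw [hd]
  set π : (Fin (m+1) → ℝ) → (Fin m → ℝ) := fun x i => x i.succ
  have hπ : LipschitzWith 1 π := by
    refine LipschitzWith.of_dist_le_mul fun x y => ?_
    rw [NNReal.coe_one, one_mul]
    exact (dist_pi_le_iff dist_nonneg).2 fun i => dist_le_pi_dist x y i.succ
  set r : ℝ := 1 / (m + 1)
  have hr : 0 < r := by positivity
  have hr1 : r ≤ 1 := by
    rw [div_le_one (by positivity)]; linarith [(Nat.cast_nonneg m : (0:ℝ) ≤ m)]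
  have hmr : m * r ≤ 1 := by
    rw [mul_one_div, div_le_one (by positivity)]; linarith
  have hsub : Set.Icc (fun _ => 1 - r) (fun _ => 1 + r) ⊆ π '' (SV (m+1)) := by
    rintro z ⟨h1, h2⟩
    have hs1 : m * (1 - r) ≤ ∑ i, z i := by
      have := Finset.sum_le_sum (s := Finset.univ) fun i (_ : i ∈ Finset.univ) => h1 i
      simp at this; linarith
    have hs2 : ∑ i, z i ≤ m * (1 + r) := by
      have := Finset.sum_le_sum (s := Finset.univ) fun i (_ : i ∈ Finset.univ) => h2 i
      simp at this; linarith
    refine ⟨Fin.cons ((m+1 : ℕ) - ∑ i, z i) z, ⟨fun k => ?_, ?_⟩, ?_⟩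
    · refine Fin.cases ?_ (fun i => ?_) k
      · simp only [Fin.cons_zero]; push_cast; constructor <;> nlinarith
      · simp only [Fin.cons_succ]
        have := h1 i
        have := h2 i
        simp only at *
        constructor <;> linarith
    · rw [Fin.sum_univ_succ]; simp
    · funext i; simp [π]
  have h1 := hπ.hausdorffMeasure_image_le (d := (Fintype.card (Fin m) : ℝ)) (by positivity) (SV (m+1))
  intro h0
  rw [h0, mul_zero, hausdorffMeasure_pi_real] at h1
  have h2 := (measure_mono hsub).trans h1
  rw [Real.volume_Icc_pi, nonpos_iff_eq_zero, Finset.prod_eq_zero_iff] at h2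
  obtain ⟨i, _, hi⟩ := h2
  rw [ENNReal.ofReal_eq_zero] at hi
  linarith

lemma UV_prob {n : ℕ} (hn : 1 ≤ n) : IsProbabilityMeasure (UV n) := by
  obtain ⟨m, rfl⟩ : ∃ m, n = m + 1 := ⟨n - 1, by omega⟩
  constructor
  unfold UV
  rw [Measure.smul_apply, Measure.restrict_apply_univ, smul_eq_mul]
  exact ENNReal.inv_mul_cancel (hausdorff_SV_pos m) (hausdorff_SV_lt_top m)

lemma UV_supp (n : ℕ) : ∀ᵐ x ∂(UV n), x ∈ SV n := by
  unfold UV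
  exact Measure.ae_smul_measure (ae_restrict_mem (measurableSet_SV n)) _

lemma UV_inv {n : ℕ} (i j : Fin n) (hij : i ≠ j) {f : (Fin n → ℝ) → ENNReal} (hf : Measurable f) :
    ∫⁻ x, KK (i, j) f x ∂(UV n) = ∫⁻ x, f x ∂(UV n) := by
  obtain ⟨m, rfl⟩ : ∃ m, n = m + 1 := ⟨n - 1, by have := i.2; omega⟩
  unfold UV
  rw [lintegral_smul_measure, lintegral_smul_measure,
    invariance _ (hausdorff_SV_lt_top m) i j hij ?_ hf]
  intro t g hg
  have h := (IsometryEquiv.addRight (t • vdir i j)).map_hausdorffMeasure (((m+1:ℕ):ℝ) - 1)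
  conv_rhs => rw [← h]
  rw [lintegral_map hg (IsometryEquiv.continuous _).measurable]
  rfl

lemma UV_refl {n : ℕ} (i : Fin n) {f : (Fin n → ℝ) → ENNReal} (hf : Measurable f) :
    ∫⁻ x, f (fun k => 2 - x k) ∂(UV n) = ∫⁻ x, f x ∂(UV n) := by
  have h := (IsometryEquiv.subLeft (fun _ : Fin n => (2:ℝ))).map_hausdorffMeasure ((n:ℝ) - 1)
  have hS := measurableSet_SV n
  have hm : Measurable (IsometryEquiv.subLeft (fun _ : Fin n => (2:ℝ))) :=
    (IsometryEquiv.continuous _).measurable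
  have hpre : (IsometryEquiv.subLeft (fun _ : Fin n => (2:ℝ))) ⁻¹' (SV n) = SV n := by
    ext x
    simp only [Set.mem_preimage, SV, Set.mem_ofPred_eq]
    have : ∀ k, (IsometryEquiv.subLeft (fun _ : Fin n => (2:ℝ))) x k = 2 - x k := fun k => rfl
    simp only [this, Finset.sum_sub_distrib]
    simp only [Finset.sum_const, Finset.card_univ, Fintype.card_fin, nsmul_eq_mul]
    constructor
    · rintro ⟨a, b⟩
      exact ⟨fun i => ⟨by linarith [(a i).2], by linarith [(a i).1]⟩, by linarith⟩
    · rintro ⟨a, b⟩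
      exact ⟨fun i => ⟨by linarith [(a i).2], by linarith [(a i).1]⟩, by linarith⟩
  have hr : Measure.map (IsometryEquiv.subLeft (fun _ : Fin n => (2:ℝ)))
      ((μH[(n : ℝ) - 1]).restrict (SV n)) = (μH[(n : ℝ) - 1]).restrict (SV n) := by
    conv_lhs => rw [← hpre]
    rw [← Measure.restrict_map hm hS, h]
  unfold UV
  rw [lintegral_smul_measure, lintegral_smul_measure]
  congr 1
  conv_rhs => rw [← hr]
  rw [lintegral_map hf hm]
  rfl

lemma UV_coord {n : ℕ} (i : Fin n) {η : ℝ} (hη : 0 < η) :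
    UV n {x | x i < η} ≤ ENNReal.ofReal η := by
  have hn : 1 ≤ n := by have := i.2; omega
  have := UV_prob hn
  set B : Set (Fin n → ℝ) := {x | x i < η}
  have hB : MeasurableSet B := measurableSet_lt (measurable_pi_apply i) measurable_const
  have hfk : ∀ k, Measurable (B.indicator fun x : Fin n → ℝ => ENNReal.ofReal (x k)) := fun k =>
    (measurable_pi_apply k).ennreal_ofReal.indicator hB
  have hk : ∀ k, ∫⁻ x, B.indicator (fun x => ENNReal.ofReal (x k)) x ∂(UV n) ≤ ENNReal.ofReal η := by
    intro k
    by_cases hki : k = i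
    · subst hki
      calc _ ≤ ∫⁻ _x, ENNReal.ofReal η ∂(UV n) := by
            refine lintegral_mono fun x => ?_
            by_cases hx : x ∈ B
            · rw [Set.indicator_of_mem hx]; exact ENNReal.ofReal_le_ofReal (le_of_lt hx)
            · rw [Set.indicator_of_notMem hx]; exact zero_le
        _ = _ := by simp
    · rw [← UV_inv i k (Ne.symm hki) (hfk k)]
      calc _ ≤ ∫⁻ _x, ENNReal.ofReal η ∂(UV n) := by
            refine lintegral_mono_ae ?_
            filter_upwards [UV_supp n] with x hx
            have h0 := lo_nonneg (x i + x k)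
            have hlh := lenI_nonneg i k hx
            unfold lenI at hlh
            set H := hiI (x i + x k)
            set Lo := loI (x i + x k)
            rcases (le_trans h0 (by linarith) : 0 ≤ H).eq_or_lt with hH | hH
            · unfold KK
              have : ∀ l ∈ Set.Icc (0:ℝ) 1,
                  B.indicator (fun x => ENNReal.ofReal (x k)) (upd x i k l) = 0 := by
                intro l hl
                rw [Set.indicator_apply_eq_zero]
                intro _
                rw [upd_j _ _ _ (Ne.symm hki), ENNReal.ofReal_eq_zero]
                change H - l * (H - Lo) ≤ 0
                nlinarith [hl.1]
              rw [setLIntegral_congr_fun measurableSet_Icc this]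
              simp
            · unfold KK
              calc _ ≤ ∫⁻ l in Set.Icc (0:ℝ) 1,
                    (Set.Icc (0:ℝ) (η / H)).indicator (fun _ => ENNReal.ofReal H) l := by
                    refine setLIntegral_mono' measurableSet_Icc fun l hl => ?_
                    by_cases hx : upd x i k l ∈ B
                    · rw [Set.indicator_of_mem hx]
                      have hx' : Lo + l * (H - Lo) < η := by
                        have : upd x i k l i < η := hx
                        rwa [upd_i] at this
                      rw [Set.indicator_of_mem]
                      · refine ENNReal.ofReal_le_ofReal ?_
                        change upd x i k l k ≤ H
                        rw [upd_j _ _ _ (Ne.symm hki)]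
                        change H - l * (H - Lo) ≤ H
                        nlinarith [hl.1]
                      · refine ⟨hl.1, ?_⟩
                        rw [le_div_iff₀ hH]
                        nlinarith [hl.2]
                    · rw [Set.indicator_of_notMem hx]; exact zero_le
                _ ≤ ∫⁻ l : ℝ, (Set.Icc (0:ℝ) (η / H)).indicator (fun _ => ENNReal.ofReal H) l :=
                    setLIntegral_le_lintegral _ _
                _ = ENNReal.ofReal η := by
                    rw [lintegral_indicator_const measurableSet_Icc, Real.volume_Icc,
                      ← ENNReal.ofReal_mul hH.le]
                    congr 1; field_simp; ring
        _ = _ := by simp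
  have hsum : ∑ k, ∫⁻ x, B.indicator (fun x => ENNReal.ofReal (x k)) x ∂(UV n) = n * UV n B := by
    rw [← lintegral_finsetSum _ (fun k _ => hfk k)]
    have : ∫⁻ x, ∑ k, B.indicator (fun x => ENNReal.ofReal (x k)) x ∂(UV n) =
        ∫⁻ x, B.indicator (fun _ => (n : ENNReal)) x ∂(UV n) := by
      refine lintegral_congr_ae ?_
      filter_upwards [UV_supp n] with x hx
      by_cases hxB : x ∈ B
      · simp only [Set.indicator_of_mem hxB]
        rw [← ENNReal.ofReal_sum_of_nonneg fun k _ => (hx.1 k).1, hx.2]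
        simp
      · simp only [Set.indicator_of_notMem hxB]; simp
    rw [this, lintegral_indicator_const hB]
  have hle : n * UV n B ≤ n * ENNReal.ofReal η := by
    rw [← hsum]
    calc _ ≤ ∑ _k : Fin n, ENNReal.ofReal η := Finset.sum_le_sum fun k _ => hk k
      _ = _ := by simp
  have hn0 : (n : ENNReal) ≠ 0 := by exact_mod_cast (by omega : n ≠ 0)
  exact (ENNReal.mul_le_mul_iff_right hn0 (by simp)).1 hle

lemma UV_len {n : ℕ} (i j : Fin n) {η : ℝ} (hη : 0 < η) :
    UV n {x | lenI i j x < η} ≤ ENNReal.ofReal (2 * η) := by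
  have hm : Measurable fun x : Fin n → ℝ => ({x | x i < η} : Set (Fin n → ℝ)).indicator
      (fun _ => (1:ENNReal)) x :=
    measurable_const.indicator (measurableSet_lt (measurable_pi_apply i) measurable_const)
  have h1 := UV_coord i hη
  have h2 : UV n {x | 2 - x i < η} ≤ ENNReal.ofReal η := by
    have e := UV_refl i hm
    have hs2 : MeasurableSet {x : Fin n → ℝ | 2 - x i < η} :=
      measurableSet_lt (by fun_prop) measurable_const
    have hs1 : MeasurableSet {x : Fin n → ℝ | x i < η} :=
      measurableSet_lt (by fun_prop) measurable_const
    rw [lintegral_indicator_const hs1, one_mul] at e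
    rw [← e] at h1
    refine le_trans (le_of_eq ?_) h1
    rw [← one_mul (UV n {x | 2 - x i < η}), ← lintegral_indicator_const hs2]
    rfl
  have hsub : UV n {x | lenI i j x < η} ≤ UV n ({x | x i < η} ∪ {x | 2 - x i < η}) := by
    refine measure_mono_ae ?_
    filter_upwards [UV_supp n] with x hx hl
    change x i < η ∨ 2 - x i < η
    have hl : hiI (x i + x j) - loI (x i + x j) < η := hl
    unfold hiI loI at hl
    rcases le_total (x i + x j) 2 with h | h
    · rw [max_eq_left (by linarith), min_eq_right h] at hl
      left; linarith [(hx.1 j).1]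
    · rw [max_eq_right (by linarith), min_eq_left h] at hl
      right; linarith [(hx.1 j).2]
  calc _ ≤ _ := hsub
    _ ≤ _ := measure_union_le _ _
    _ ≤ ENNReal.ofReal η + ENNReal.ofReal η := add_le_add h1 h2
    _ = _ := by rw [← ENNReal.ofReal_add hη.le hη.le]; congr 1; ring


/-! ### Second stage -/

/-- composition of fixed-pair kernels along a list. -/
def KL {n : ℕ} (f : (Fin n → ℝ) → ENNReal) : List (Fin n × Fin n) → (Fin n → ℝ) → ENNReal
  | [] => f
  | e :: w => KK e (KL f w)

/-- backward infection update. -/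
def infUpd {n : ℕ} (e : Fin n × Fin n) (A : Finset (Fin n)) : Finset (Fin n) :=
  if e.1 ∈ A ∨ e.2 ∈ A then insert e.1 (insert e.2 A) else A

/-- backward infection set. -/
def AS {n : ℕ} (r : Fin n) : List (Fin n × Fin n) → Finset (Fin n)
  | [] => {r}
  | e :: w => infUpd e (AS r w)

/-- the step is a genuine infection. -/
def isInf {n : ℕ} (e : Fin n × Fin n) (A : Finset (Fin n)) : Prop :=
  (e.1 ∈ A ∧ e.2 ∉ A) ∨ (e.1 ∉ A ∧ e.2 ∈ A)

open Classical in
/-- failure functional. -/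
def QQ {n : ℕ} (r : Fin n) (η : ℝ) : List (Fin n × Fin n) → (Fin n → ℝ) → ENNReal
  | [] => 0
  | e :: w => fun y =>
      (if isInf e (AS r w) then ({y | lenI e.1 e.2 y < η} : Set (Fin n → ℝ)).indicator 1 y else 0)
        + KK e (QQ r η w) y

lemma measurable_KL {n : ℕ} {f : (Fin n → ℝ) → ENNReal} (hf : Measurable f)
    (w : List (Fin n × Fin n)) : Measurable (KL f w) := by
  induction w with
  | nil => exact hf
  | cons e w ih => exact measurable_KK e ih

lemma measurableSet_len {n : ℕ} (i j : Fin n) (η : ℝ) :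
    MeasurableSet {y : Fin n → ℝ | lenI i j y < η} :=
  measurableSet_lt (measurable_lenI i j) measurable_const

lemma measurable_QQ {n : ℕ} (r : Fin n) (η : ℝ)
    (w : List (Fin n × Fin n)) : Measurable (QQ r η w) := by
  induction w with
  | nil => exact measurable_const
  | cons e w ih =>
    unfold QQ
    refine Measurable.add ?_ (measurable_KK e ih)
    split_ifs
    · exact measurable_one.indicator (measurableSet_len e.1 e.2 η)
    · exact measurable_const

lemma KK_le_one {n : ℕ} {f : (Fin n → ℝ) → ENNReal} (hf : ∀ x, f x ≤ 1) (e : Fin n × Fin n)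
    (x : Fin n → ℝ) : KK e f x ≤ 1 := by
  unfold KK
  calc _ ≤ ∫⁻ _l in Set.Icc (0:ℝ) 1, (1:ENNReal) := lintegral_mono fun _ => hf _
    _ = 1 := by simp

lemma KL_le_one {n : ℕ} {f : (Fin n → ℝ) → ENNReal} (hf : ∀ x, f x ≤ 1)
    (w : List (Fin n × Fin n)) (x : Fin n → ℝ) : KL f w x ≤ 1 := by
  induction w generalizing x with
  | nil => exact hf x
  | cons e w ih => exact KK_le_one ih e x

lemma KK_swap {n : ℕ} (f : (Fin n → ℝ) → ENNReal) (i j : Fin n) (hij : i ≠ j)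
    (x : Fin n → ℝ) : KK (j, i) f x = KK (i, j) f x := by
  unfold KK
  have h : ∀ l, upd x j i l = upd x i j (1 - l) := by
    intro l
    rw [← upd_swap x i j hij (1 - l)]; congr 1; ring
  simp only [h]
  rw [← lintegral_indicator measurableSet_Icc, ← lintegral_indicator measurableSet_Icc,
    ← lintegral_sub_left_eq_self _ (1:ℝ)]
  refine lintegral_congr fun l => ?_
  have : (1 - l ∈ Set.Icc (0:ℝ) 1) ↔ l ∈ Set.Icc (0:ℝ) 1 := by
    simp only [Set.mem_Icc]; constructor <;> rintro ⟨a, b⟩ <;> constructor <;> linarith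
  by_cases hl : l ∈ Set.Icc (0:ℝ) 1
  · rw [Set.indicator_of_mem hl, Set.indicator_of_mem (this.2 hl)]; congr 2; ring
  · rw [Set.indicator_of_notMem hl, Set.indicator_of_notMem (fun h => hl (this.1 h))]

/-- vector with prescribed values at the pair. -/
def setP {n : ℕ} (x : Fin n → ℝ) (i j : Fin n) (u : ℝ) : Fin n → ℝ := fun k =>
  if k = i then u else if k = j then x i + x j - u else x k

lemma upd_eq_setP {n : ℕ} (x : Fin n → ℝ) (i j : Fin n) (l : ℝ) :
    upd x i j l = setP x i j (loI (x i + x j) + l * lenI i j x) := by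
  funext k
  have h := lo_add_hi (x i + x j)
  by_cases hki : k = i
  · subst hki; simp [upd, setP, lenI]
  · by_cases hkj : k = j
    · subst hkj; simp [upd, setP, lenI, hki]; linarith
    · simp [upd, setP, hki, hkj]

lemma measurable_setP {n : ℕ} (x : Fin n → ℝ) (i j : Fin n) : Measurable (setP x i j) := by
  refine measurable_pi_lambda _ fun k => ?_
  unfold setP
  split_ifs <;> fun_prop

lemma KK_setP {n : ℕ} (f : (Fin n → ℝ) → ENNReal) (i j : Fin n) (x : Fin n → ℝ)
    (hl : 0 < lenI i j x) :
    KK (i, j) f x = ENNReal.ofReal (lenI i j x)⁻¹ *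
      ∫⁻ u in Set.Icc (loI (x i + x j)) (hiI (x i + x j)), f (setP x i j u) := by
  unfold KK
  simp only [upd_eq_setP]
  rw [lintegral_affine (fun u => f (setP x i j u)) _ _ hl]
  congr 4
  unfold lenI; ring

lemma setP_mem {n : ℕ} {x : Fin n → ℝ} (hx : x ∈ SV n) (i j : Fin n) (hij : i ≠ j)
    (hl : 0 < lenI i j x) {u : ℝ} (hu : u ∈ Set.Icc (loI (x i + x j)) (hiI (x i + x j))) :
    setP x i j u ∈ SV n := by
  have e : setP x i j u = upd x i j ((u - loI (x i + x j)) / lenI i j x) := by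
    rw [upd_eq_setP]; congr 1; field_simp; ring
  rw [e]
  refine upd_mem hx i j hij ⟨div_nonneg (by linarith [hu.1]) hl.le, ?_⟩
  rw [div_le_one hl]; unfold lenI; linarith [hu.2]

/-- Coupling step at an infection: `i` healthy (made equal), `j` carries the discrepancy. -/
lemma infect_step {n : ℕ} (i j : Fin n) (hij : i ≠ j) {x y : Fin n → ℝ} (hx : x ∈ SV n)
    (hy : y ∈ SV n) {g h : (Fin n → ℝ) → ENNReal} (hg : ∀ z, g z ≤ 1) (hgm : Measurable g)
    (hhm : Measurable h) {η : ℝ} (hη : 0 < η) (hlen : η ≤ lenI i j y)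
    (hstep : ∀ u, setP x i j u ∈ SV n → setP y i j u ∈ SV n →
      g (setP x i j u) ≤ h (setP y i j u)) :
    KK (i, j) g x ≤ KK (i, j) h y + ENNReal.ofReal (D1 x y / η) := by
  set sx := x i + x j
  set sy := y i + y j
  have hly : 0 < lenI i j y := lt_of_lt_of_le hη hlen
  have hlx0 := lenI_nonneg i j hx
  have hab := abs_lo_hi sx sy
  have hD : |sx - sy| ≤ D1 x y := by
    unfold D1
    rw [sum_pair i j hij]
    have h1 := abs_add_le (x i - y i) (x j - y j)
    have h2 : 0 ≤ ∑ k ∈ (Finset.univ.erase i).erase j, |x k - y k| :=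
      Finset.sum_nonneg fun _ _ => abs_nonneg _
    have e : sx - sy = x i - y i + (x j - y j) := by simp only [sx, sy]; ring
    rw [e]; linarith
  have hLx : lenI i j x = hiI sx - loI sx := rfl
  have hLy : lenI i j y = hiI sy - loI sy := rfl
  by_cases hsmall : η ≤ D1 x y
  · refine le_trans (KK_le_one hg _ _) (le_add_left ?_)
    rw [← ENNReal.ofReal_one]
    exact ENNReal.ofReal_le_ofReal ((one_le_div hη).2 hsmall)
  push Not at hsmall
  have a1 := abs_le.1 (le_refl |loI sx - loI sy|)
  have a2 := abs_le.1 (le_refl |hiI sx - hiI sy|)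
  have a3 := abs_nonneg (loI sx - loI sy)
  have a4 := abs_nonneg (hiI sx - hiI sy)
  have hlx : 0 < lenI i j x := by linarith [a1.1, a1.2, a2.1, a2.2]
  rw [KK_setP g i j x hlx, KK_setP h i j y hly]
  change ENNReal.ofReal (lenI i j x)⁻¹ * ∫⁻ u in Set.Icc (loI sx) (hiI sx), g (setP x i j u) ≤
    (ENNReal.ofReal (lenI i j y)⁻¹ * ∫⁻ u in Set.Icc (loI sy) (hiI sy), h (setP y i j u)) +
      ENNReal.ofReal (D1 x y / η)
  set M := max (lenI i j x) (lenI i j y)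
  have hM1 : lenI i j x ≤ M := le_max_left _ _
  have hM2 : lenI i j y ≤ M := le_max_right _ _
  have hM : 0 < M := lt_of_lt_of_le hlx hM1
  set m1 := max (loI sx) (loI sy)
  set m2 := min (hiI sx) (hiI sy)
  set p : ℝ → ENNReal := (Set.Icc (loI sx) (hiI sx)).indicator fun _ => ENNReal.ofReal (lenI i j x)⁻¹
  set q : ℝ → ENNReal := (Set.Icc m1 m2).indicator fun _ => ENNReal.ofReal M⁻¹
  have hpm : Measurable p := measurable_const.indicator measurableSet_Icc
  have hqm : Measurable q := measurable_const.indicator measurableSet_Icc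
  have hIx : Set.Icc m1 m2 ⊆ Set.Icc (loI sx) (hiI sx) :=
    Set.Icc_subset_Icc (le_max_left _ _) (min_le_left _ _)
  have hIy : Set.Icc m1 m2 ⊆ Set.Icc (loI sy) (hiI sy) :=
    Set.Icc_subset_Icc (le_max_right _ _) (min_le_right _ _)
  have hqp : ∀ u, q u ≤ p u := by
    intro u
    by_cases hu : u ∈ Set.Icc m1 m2
    · simp only [p, q, Set.indicator_of_mem hu, Set.indicator_of_mem (hIx hu)]
      exact ENNReal.ofReal_le_ofReal (inv_anti₀ hlx hM1)
    · simp only [q, Set.indicator_of_notMem hu]; exact zero_le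
  have hL : ENNReal.ofReal (lenI i j x)⁻¹ * ∫⁻ u in Set.Icc (loI sx) (hiI sx), g (setP x i j u) =
      ∫⁻ u, p u * g (setP x i j u) := by
    rw [← lintegral_indicator measurableSet_Icc, ← lintegral_const_mul' _ _ ENNReal.ofReal_ne_top]
    refine lintegral_congr fun u => ?_
    by_cases hu : u ∈ Set.Icc (loI sx) (hiI sx)
    · simp only [p, Set.indicator_of_mem hu]
    · simp only [p, Set.indicator_of_notMem hu]; simp
  have hR : ∫⁻ u, q u * h (setP y i j u) ≤
      ENNReal.ofReal (lenI i j y)⁻¹ * ∫⁻ u in Set.Icc (loI sy) (hiI sy), h (setP y i j u) := by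
    rw [← lintegral_indicator measurableSet_Icc, ← lintegral_const_mul' _ _ ENNReal.ofReal_ne_top]
    refine lintegral_mono fun u => ?_
    by_cases hu : u ∈ Set.Icc m1 m2
    · simp only [q, Set.indicator_of_mem hu, Set.indicator_of_mem (hIy hu)]
      exact mul_le_mul' (ENNReal.ofReal_le_ofReal (inv_anti₀ hly hM2)) le_rfl
    · simp only [q, Set.indicator_of_notMem hu]; simp
  have hqg : ∫⁻ u, q u * g (setP x i j u) ≤ ∫⁻ u, q u * h (setP y i j u) := by
    refine lintegral_mono fun u => ?_
    by_cases hu : u ∈ Set.Icc m1 m2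
    · exact mul_le_mul' le_rfl (hstep u (setP_mem hx i j hij hlx (hIx hu))
        (setP_mem hy i j hij hly (hIy hu)))
    · simp only [q, Set.indicator_of_notMem hu]; simp
  have hpq : ∫⁻ u, (p u - q u) ≤ ENNReal.ofReal (D1 x y / η) := by
    have hqi : ∫⁻ u, q u = ENNReal.ofReal (M⁻¹ * (m2 - m1)) := by
      rw [lintegral_indicator_const measurableSet_Icc, Real.volume_Icc, ENNReal.ofReal_mul
        (by positivity)]
    rw [lintegral_sub hqm (by rw [hqi]; exact ENNReal.ofReal_ne_top)
      (Filter.Eventually.of_forall hqp), hqi, lintegral_indicator_const measurableSet_Icc,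
      Real.volume_Icc, ← ENNReal.ofReal_mul (by positivity), ← hLx, inv_mul_cancel₀ hlx.ne']
    have hm : M - |sx - sy| ≤ m2 - m1 := by
      rw [← hab]
      rcases max_cases (lenI i j x) (lenI i j y) with ⟨h1, h2⟩ | ⟨h1, h2⟩ <;>
      rcases max_cases (loI sx) (loI sy) with ⟨h3, h4⟩ | ⟨h3, h4⟩ <;>
      rcases min_cases (hiI sx) (hiI sy) with ⟨h5, h6⟩ | ⟨h5, h6⟩ <;>
      simp only [M, m1, m2, h1, h3, h5] <;> linarith [a1.1, a1.2, a2.1, a2.2]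
    have hmn : 0 ≤ m2 - m1 := by linarith
    rw [← ENNReal.ofReal_sub _ (by positivity)]
    refine ENNReal.ofReal_le_ofReal ?_
    have hη' : η ≤ M := le_trans hlen hM2
    have : M⁻¹ * (m2 - m1) ≥ M⁻¹ * (M - |sx - sy|) :=
      mul_le_mul_of_nonneg_left hm (by positivity)
    have e : M⁻¹ * (M - |sx - sy|) = 1 - |sx - sy| / M := by field_simp
    have : |sx - sy| / M ≤ D1 x y / η := div_le_div₀ (D1_nonneg x y) hD hη hη'
    linarith
  rw [hL]
  calc ∫⁻ u, p u * g (setP x i j u)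
      ≤ ∫⁻ u, (q u * g (setP x i j u) + (p u - q u)) := by
        refine lintegral_mono fun u => ?_
        calc p u * g (setP x i j u) = (q u + (p u - q u)) * g (setP x i j u) := by
              rw [add_tsub_cancel_of_le (hqp u)]
          _ = q u * g (setP x i j u) + (p u - q u) * g (setP x i j u) := add_mul _ _ _
          _ ≤ _ := add_le_add le_rfl (mul_le_of_le_one_right' (hg _))
    _ = (∫⁻ u, q u * g (setP x i j u)) + ∫⁻ u, (p u - q u) :=
        lintegral_add_left (hqm.mul (hgm.comp (measurable_setP x i j))) _
    _ ≤ _ := add_le_add (hqg.trans hR) hpq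


lemma D1_setP_le {n : ℕ} (x y : Fin n → ℝ) (i j : Fin n) (hij : i ≠ j) (u : ℝ) :
    D1 (setP x i j u) (setP y i j u) ≤ D1 x y := by
  unfold D1
  rw [sum_pair i j hij, sum_pair i j hij (fun k => |x k - y k|)]
  have e1 : setP x i j u i - setP y i j u i = 0 := by simp [setP]
  have e2 : setP x i j u j - setP y i j u j = (x i - y i) + (x j - y j) := by
    simp [setP, hij.symm]; ring
  have e3 : ∑ k ∈ (Finset.univ.erase i).erase j, |setP x i j u k - setP y i j u k| =
      ∑ k ∈ (Finset.univ.erase i).erase j, |x k - y k| := by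
    refine Finset.sum_congr rfl fun k hk => ?_
    simp only [Finset.mem_erase] at hk
    simp [setP, hk.1, hk.2.1]
  rw [e1, e2, e3, abs_zero]
  linarith [abs_add_le (x i - y i) (x j - y j)]

lemma KK_mono_mem {n : ℕ} (i j : Fin n) (hij : i ≠ j) {x y : Fin n → ℝ} (hx : x ∈ SV n)
    (hy : y ∈ SV n) {g h : (Fin n → ℝ) → ENNReal}
    (hgh : ∀ l ∈ Set.Icc (0:ℝ) 1, upd x i j l ∈ SV n → upd y i j l ∈ SV n →
      g (upd x i j l) ≤ h (upd y i j l)) :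
    KK (i, j) g x ≤ KK (i, j) h y := by
  unfold KK
  exact setLIntegral_mono' measurableSet_Icc fun l hl =>
    hgh l hl (upd_mem hx i j hij hl) (upd_mem hy i j hij hl)

lemma KK_add_const {n : ℕ} (e : Fin n × Fin n) {g h : (Fin n → ℝ) → ENNReal} (hg : Measurable g)
    (hh : Measurable h) (c : ENNReal) (y : Fin n → ℝ) :
    KK e (fun z => g z + h z + c) y = KK e g y + KK e h y + c := by
  have m : Measurable fun l => upd y e.1 e.2 l :=
    (measurable_upd e.1 e.2).comp (measurable_const.prodMk measurable_id)
  unfold KK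
  rw [lintegral_add_right _ measurable_const, lintegral_add_left (f := fun l => g (upd y e.1 e.2 l)) (hg.comp m)]
  simp

lemma lenI_symm {n : ℕ} (i j : Fin n) (x : Fin n → ℝ) : lenI j i x = lenI i j x := by
  unfold lenI; rw [add_comm]

/-- second stage coupling bound. -/
lemma stage_two {n : ℕ} (r : Fin n) {η : ℝ} (hη : 0 < η) {f : (Fin n → ℝ) → ENNReal}
    (hf : Measurable f) (hf1 : ∀ z, f z ≤ 1) (w : List (Fin n × Fin n))
    (hw : ∀ e ∈ w, e.1 ≠ e.2) (x y : Fin n → ℝ) (hx : x ∈ SV n) (hy : y ∈ SV n)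
    (hxy : ∀ k, k ∉ AS r w → x k = y k) :
    KL f w x ≤ KL f w y + QQ r η w y + ((AS r w).card : ENNReal) * ENNReal.ofReal (D1 x y / η) := by
  induction w generalizing x y with
  | nil =>
    have : x = y := by
      have hs : ∑ k, (x k - y k) = 0 := by rw [Finset.sum_sub_distrib, hx.2, hy.2, sub_self]
      have hk : ∀ k, k ≠ r → x k = y k := fun k hk => hxy k (by simpa [AS] using hk)
      rw [Finset.sum_eq_single r (fun k _ hkr => by rw [hk k hkr, sub_self]) (by simp)] at hs
      funext k
      by_cases h : k = r
      · subst h; linarith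
      · exact hk k h
    subst this
    rw [add_assoc]
    exact le_self_add
  | cons e w ih =>
    obtain ⟨i, j⟩ := e
    have hij : i ≠ j := hw (i, j) (by simp)
    have hw' : ∀ e ∈ w, e.1 ≠ e.2 := fun e he => hw e (by simp [he])
    have ih' := ih hw'
    set A := AS r w with hA
    have hAS : AS r ((i, j) :: w) = infUpd (i, j) A := rfl
    rw [hAS] at hxy ⊢
    have hKL : ∀ z, KL f ((i, j) :: w) z = KK (i, j) (KL f w) z := fun _ => rfl
    have hQQ : KK (i, j) (QQ r η w) y ≤ QQ r η ((i, j) :: w) y := by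
      change _ ≤ _ + KK (i, j) (QQ r η w) y; exact le_add_self
    have mKL := measurable_KL hf w
    have mQ := measurable_QQ r η w
    by_cases hI : isInf (i, j) A
    · have hins : infUpd (i, j) A = insert i (insert j A) := by
        unfold infUpd; rw [if_pos]
        rcases hI with h | h
        · exact Or.inl h.1
        · exact Or.inr h.2
      rw [hins] at hxy ⊢
      by_cases hl : lenI i j y < η
      · have : 1 ≤ QQ r η ((i, j) :: w) y := by
          unfold QQ
          rw [if_pos hI, Set.indicator_of_mem (by exact hl)]
          exact le_self_add
        exact (KL_le_one hf1 _ _).trans (this.trans (le_trans le_add_self le_self_add))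
      push Not at hl
      -- general healthy a, infected b
      have main : ∀ a b : Fin n, a ≠ b → a ∉ A → b ∈ A →
          (∀ k, k ∉ insert a (insert b A) → x k = y k) → η ≤ lenI a b y →
          KK (a, b) (KL f w) x ≤ KK (a, b) (KL f w) y + KK (a, b) (QQ r η w) y +
            (((insert a (insert b A)).card : ℕ) : ENNReal) * ENNReal.ofReal (D1 x y / η) := by
        intro a b hab ha hb hag hle
        have hcard : (insert a (insert b A)).card = A.card + 1 := by
          rw [Finset.insert_eq_of_mem hb, Finset.card_insert_of_notMem ha]
        have := infect_step a b hab hx hy (g := KL f w)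
          (h := fun z => KL f w z + QQ r η w z + (A.card : ENNReal) * ENNReal.ofReal (D1 x y / η))
          (KL_le_one hf1 w) mKL ((mKL.add mQ).add_const _) hη hle (by
            intro u hu1 hu2
            refine (ih' _ _ hu1 hu2 ?_).trans (add_le_add le_rfl (mul_le_mul' le_rfl
              (ENNReal.ofReal_le_ofReal (div_le_div_of_nonneg_right (D1_setP_le x y a b hab u) hη.le))))
            intro k hk
            by_cases hka : k = a
            · simp [setP, hka]
            · have hkb : k ≠ b := fun h => hk (h ▸ hb)
              simp only [setP, hka, hkb, if_false]
              exact hag k (by simp [hka, hkb, hk]))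
        rw [KK_add_const (a, b) mKL mQ] at this
        refine this.trans (le_of_eq ?_)
        rw [hcard]; push_cast; ring
      rw [hKL x, hKL y]
      refine le_trans ?_ (add_le_add (add_le_add le_rfl hQQ) le_rfl)
      rcases hI with ⟨h1, h2⟩ | ⟨h1, h2⟩
      · have := main j i hij.symm h2 h1 (by rwa [Finset.insert_comm] ) (by rwa [lenI_symm])
        rw [KK_swap _ i j hij, KK_swap _ i j hij, KK_swap _ i j hij, Finset.insert_comm] at this
        exact this
      · exact main i j hij h1 h2 hxy hl
    · have hno : infUpd (i, j) A = A := by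
        unfold infUpd
        unfold isInf at hI
        simp only at hI ⊢
        split_ifs with h
        · have h1 : i ∈ A := by tauto
          have h2 : j ∈ A := by tauto
          rw [Finset.insert_eq_of_mem (s := A) h2, Finset.insert_eq_of_mem h1]
        · rfl
      rw [hno] at hxy ⊢
      rw [hKL x, hKL y]
      refine le_trans ?_ (add_le_add (add_le_add le_rfl hQQ) le_rfl)
      rw [← KK_add_const (i, j) mKL mQ]
      refine KK_mono_mem i j hij hx hy fun l hl h1 h2 => ?_
      refine (ih' _ _ h1 h2 ?_).trans (add_le_add le_rfl (mul_le_mul' le_rfl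
        (ENNReal.ofReal_le_ofReal (div_le_div_of_nonneg_right (D1_upd_le x y i j hij hl) hη.le))))
      intro k hk
      by_cases hki : k = i
      · subst hki
        have hj : j ∉ A := by unfold isInf at hI; simp only at hI; tauto
        rw [upd_i, upd_i, hxy k hk, hxy j hj]
      · by_cases hkj : k = j
        · subst hkj
          have hi : i ∉ A := by unfold isInf at hI; simp only at hI; tauto
          rw [upd_j _ _ _ hij, upd_j _ _ _ hij, hxy k hk, hxy i hi]
        · rw [upd_k _ _ _ _ hki hkj, upd_k _ _ _ _ hki hkj, hxy k hk]

lemma QQ_int {n : ℕ} (r : Fin n) {η : ℝ} (hη : 0 < η) (w : List (Fin n × Fin n))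
    (hw : ∀ e ∈ w, e.1 ≠ e.2) :
    ∫⁻ y, QQ r η w y ∂UV n ≤ ((AS r w).card : ENNReal) * ENNReal.ofReal (2 * η) := by
  induction w with
  | nil => simp [QQ]
  | cons e w ih =>
    obtain ⟨i, j⟩ := e
    have hij : i ≠ j := hw (i, j) (by simp)
    have ih' := ih (fun e he => hw e (by simp [he]))
    have mQ := measurable_QQ r η w
    have hAS : AS r ((i, j) :: w) = infUpd (i, j) (AS r w) := rfl
    set A := AS r w with hA
    rw [hAS]
    unfold QQ
    rw [lintegral_add_right _ (measurable_KK _ mQ), UV_inv i j hij mQ]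
    by_cases hI : isInf (i, j) A
    · have hcard : (infUpd (i, j) A).card = A.card + 1 := by
        unfold infUpd
        rcases hI with ⟨h1, h2⟩ | ⟨h1, h2⟩ <;> simp only at h1 h2
        · rw [if_pos (Or.inl h1), Finset.insert_comm, Finset.insert_eq_of_mem (s := A) h1,
            Finset.card_insert_of_notMem h2]
        · rw [if_pos (Or.inr h2), Finset.insert_eq_of_mem (s := A) h2,
            Finset.card_insert_of_notMem h1]
      simp only [← hA, if_pos hI]
      rw [lintegral_indicator_one (measurableSet_len i j η), hcard]
      push_cast
      rw [add_mul, one_mul, add_comm]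
      exact add_le_add ih' (UV_len i j hη)
    · simp only [← hA, if_neg hI, lintegral_zero, zero_add]
      refine ih'.trans (mul_le_mul' ?_ le_rfl)
      have : A ⊆ infUpd (i, j) A := by
        unfold infUpd; split_ifs
        · exact (Finset.subset_insert _ _).trans (Finset.subset_insert _ _)
        · exact subset_rfl
      exact_mod_cast Finset.card_le_card this

/-- Average over uniformly random lists of pairs. -/
def Mavg (n : ℕ) : ℕ → (List (Fin n × Fin n) → ENNReal) → ENNReal
  | 0, F => F []
  | T + 1, F => ((pairsF n).card : ENNReal)⁻¹ * ∑ e ∈ pairsF n, Mavg n T (fun w => F (e :: w))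

lemma pairsF_ne {n : ℕ} {e : Fin n × Fin n} (he : e ∈ pairsF n) : e.1 ≠ e.2 := by
  simp only [pairsF, Finset.mem_filter] at he
  exact he.2.ne

lemma Mavg_mono {n : ℕ} (T : ℕ) {F G : List (Fin n × Fin n) → ENNReal}
    (h : ∀ w, (∀ e ∈ w, e.1 ≠ e.2) → F w ≤ G w) : Mavg n T F ≤ Mavg n T G := by
  induction T generalizing F G with
  | zero => exact h [] (by simp)
  | succ T ih =>
    unfold Mavg
    refine mul_le_mul' le_rfl (Finset.sum_le_sum fun e he => ih fun w hw => h _ ?_)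
    intro e' he'
    rcases List.mem_cons.1 he' with rfl | h'
    · exact pairsF_ne he
    · exact hw e' h'

lemma Mavg_add {n : ℕ} (T : ℕ) (F G : List (Fin n × Fin n) → ENNReal) :
    Mavg n T (fun w => F w + G w) = Mavg n T F + Mavg n T G := by
  induction T generalizing F G with
  | zero => rfl
  | succ T ih =>
    unfold Mavg
    simp only [ih, Finset.sum_add_distrib, mul_add]

lemma Mavg_const_mul {n : ℕ} (T : ℕ) (c : ENNReal) (F : List (Fin n × Fin n) → ENNReal) :
    Mavg n T (fun w => c * F w) = c * Mavg n T F := by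
  induction T generalizing F with
  | zero => rfl
  | succ T ih =>
    unfold Mavg
    simp only [ih, ← Finset.mul_sum]
    ring

lemma Mavg_sum {n : ℕ} (T : ℕ) {ι : Type*} (s : Finset ι)
    (F : ι → List (Fin n × Fin n) → ENNReal) :
    Mavg n T (fun w => ∑ i ∈ s, F i w) = ∑ i ∈ s, Mavg n T (F i) := by
  induction T generalizing F with
  | zero => rfl
  | succ T ih =>
    unfold Mavg
    simp only [ih]
    rw [Finset.sum_comm, Finset.mul_sum]

lemma card_inv_mul {n : ℕ} [NeZero (pairsF n).card] (c : ENNReal) :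
    ((pairsF n).card : ENNReal)⁻¹ * ∑ _e ∈ pairsF n, c = c := by
  rw [Finset.sum_const, nsmul_eq_mul, ← mul_assoc, ENNReal.inv_mul_cancel, one_mul]
  · exact_mod_cast NeZero.ne _
  · exact ENNReal.natCast_ne_top _

lemma Mavg_const {n : ℕ} [NeZero (pairsF n).card] (T : ℕ) (c : ENNReal) :
    Mavg n T (fun _ => c) = c := by
  induction T with
  | zero => rfl
  | succ T ih =>
    unfold Mavg
    simp only [ih]
    exact card_inv_mul c

lemma Mavg_succ_back {n : ℕ} (T : ℕ) (F : List (Fin n × Fin n) → ENNReal) :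
    Mavg n (T + 1) F =
      Mavg n T (fun w => ((pairsF n).card : ENNReal)⁻¹ * ∑ e ∈ pairsF n, F (e :: w)) := by
  rw [Mavg_const_mul, Mavg_sum]
  rfl

lemma measurable_Mavg {n : ℕ} {α : Type*} [MeasurableSpace α] (T : ℕ)
    {F : List (Fin n × Fin n) → α → ENNReal} (hF : ∀ w, Measurable (F w)) :
    Measurable fun a => Mavg n T (fun w => F w a) := by
  induction T generalizing F with
  | zero => exact hF []
  | succ T ih =>
    unfold Mavg
    exact (Finset.measurable_fun_sum _ fun e _ => ih fun w => hF (e :: w)).const_mul _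

lemma lintegral_Mavg {n : ℕ} {α : Type*} [MeasurableSpace α] (μ : Measure α) (T : ℕ)
    {F : List (Fin n × Fin n) → α → ENNReal} (hF : ∀ w, Measurable (F w)) :
    ∫⁻ a, Mavg n T (fun w => F w a) ∂μ = Mavg n T (fun w => ∫⁻ a, F w a ∂μ) := by
  induction T generalizing F with
  | zero => rfl
  | succ T ih =>
    unfold Mavg
    rw [lintegral_const_mul _ (Finset.measurable_fun_sum _ fun e _ =>
      measurable_Mavg T fun w => hF (e :: w)), lintegral_finsetSum _ (fun e _ =>
      measurable_Mavg T fun w => hF (e :: w))]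
    congr 1
    exact Finset.sum_congr rfl fun e _ => ih fun w => hF (e :: w)

lemma PP_iter {n : ℕ} (T : ℕ) {f : (Fin n → ℝ) → ENNReal} (hf : Measurable f) (x : Fin n → ℝ) :
    (PP n)^[T] f x = Mavg n T (fun w => KL f w x) := by
  induction T generalizing x with
  | zero => rfl
  | succ T ih =>
    rw [Function.iterate_succ_apply']
    have : (PP n)^[T] f = fun x => Mavg n T (fun w => KL f w x) := funext ih
    rw [this]
    change ((pairsF n).card : ENNReal)⁻¹ * ∑ e ∈ pairsF n, _ =
      ((pairsF n).card : ENNReal)⁻¹ * ∑ e ∈ pairsF n, _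
    congr 1
    refine Finset.sum_congr rfl fun e _ => ?_
    change ∫⁻ l in Set.Icc (0:ℝ) 1, Mavg n T (fun w => KL f w (upd x e.1 e.2 l)) = _
    have m : Measurable fun l => upd x e.1 e.2 l :=
      (measurable_upd e.1 e.2).comp (measurable_const.prodMk measurable_id)
    rw [lintegral_Mavg _ T (F := fun w l => KL f w (upd x e.1 e.2 l))
      fun w => (measurable_KL hf w).comp m]
    rfl

open Classical in
/-- probability that the infection is not complete. -/
def bad (n : ℕ) (r : Fin n) (T : ℕ) : ENNReal :=
  Mavg n T (fun w => if AS r w = Finset.univ then 0 else 1)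

lemma stage_two_avg {n : ℕ} [NeZero (pairsF n).card] (r : Fin n) {η : ℝ} (hη : 0 < η)
    {f : (Fin n → ℝ) → ENNReal}
    (hf : Measurable f) (hf1 : ∀ z, f z ≤ 1) (T : ℕ) (x y : Fin n → ℝ) (hx : x ∈ SV n)
    (hy : y ∈ SV n) :
    (PP n)^[T] f x ≤ (PP n)^[T] f y + Mavg n T (fun w => QQ r η w y) +
      ((n : ENNReal) * ENNReal.ofReal (D1 x y / η) + bad n r T) := by
  classical
  rw [PP_iter T hf, PP_iter T hf]
  unfold bad
  rw [← Mavg_const (n := n) T ((n : ENNReal) * ENNReal.ofReal (D1 x y / η)), ← Mavg_add,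
    ← Mavg_add, ← Mavg_add]
  refine Mavg_mono T fun w hw => ?_
  by_cases h : AS r w = Finset.univ
  · rw [if_pos h, add_zero]
    have := stage_two r hη hf hf1 w hw x y hx hy (by simp [h])
    rw [h, Finset.card_univ, Fintype.card_fin] at this
    exact this
  · rw [if_neg h]
    exact (KL_le_one hf1 w x).trans (le_trans le_add_self le_add_self)

lemma QQ_avg_int {n : ℕ} [NeZero (pairsF n).card] (r : Fin n) {η : ℝ} (hη : 0 < η) (T : ℕ) :
    ∫⁻ y, Mavg n T (fun w => QQ r η w y) ∂UV n ≤ (n : ENNReal) * ENNReal.ofReal (2 * η) := by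
  rw [lintegral_Mavg _ T (fun w => measurable_QQ r η w),
    ← Mavg_const (n := n) T ((n : ENNReal) * ENNReal.ofReal (2 * η))]
  refine Mavg_mono T fun w hw => (QQ_int r hη w hw).trans (mul_le_mul' ?_ le_rfl)
  have := Finset.card_le_univ (AS r w)
  rw [Fintype.card_fin] at this
  exact_mod_cast this

lemma UV_PP {n : ℕ} [NeZero (pairsF n).card] {f : (Fin n → ℝ) → ENNReal} (hf : Measurable f) :
    ∫⁻ x, PP n f x ∂UV n = ∫⁻ x, f x ∂UV n := by
  unfold PP
  rw [lintegral_const_mul _ (Finset.measurable_fun_sum _ fun e _ => measurable_KK e hf),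
    lintegral_finsetSum _ (fun e _ => measurable_KK e hf)]
  rw [Finset.sum_congr rfl fun e he => UV_inv e.1 e.2 (pairsF_ne he) hf]
  exact card_inv_mul _

lemma UV_PP_iter {n : ℕ} [NeZero (pairsF n).card] (T : ℕ) {f : (Fin n → ℝ) → ENNReal}
    (hf : Measurable f) :
    ∫⁻ x, (PP n)^[T] f x ∂UV n = ∫⁻ x, f x ∂UV n := by
  induction T generalizing f with
  | zero => rfl
  | succ T ih => rw [Function.iterate_succ_apply, ih (measurable_PP hf), UV_PP hf]

/-! ### sums over pairs -/

lemma sum_pairs_symm {n : ℕ} (F : Fin n → Fin n → ℝ) (hF : ∀ i j, F i j = F j i) :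
    2 * ∑ e ∈ pairsF n, F e.1 e.2 = (∑ i, ∑ j, F i j) - ∑ i, F i i := by
  have h1 : ∑ e ∈ pairsF n, F e.1 e.2 = ∑ i, ∑ j, if i < j then F i j else 0 := by
    unfold pairsF
    rw [Finset.sum_filter, Fintype.sum_prod_type]
  have h2 : ∑ i : Fin n, ∑ j : Fin n, (if i < j then F i j else 0) =
      ∑ i : Fin n, ∑ j : Fin n, (if j < i then F i j else 0) := by
    rw [Finset.sum_comm]
    refine Finset.sum_congr rfl fun i _ => Finset.sum_congr rfl fun j _ => ?_
    rw [hF]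
  have h3 : ∑ i, F i i = ∑ i : Fin n, ∑ j : Fin n, (if i = j then F i j else 0) := by
    refine Finset.sum_congr rfl fun i _ => ?_
    rw [Finset.sum_ite_eq]; simp
  have h4 : ∑ i, ∑ j, F i j = (∑ i : Fin n, ∑ j : Fin n, (if i < j then F i j else 0)) +
      (∑ i : Fin n, ∑ j : Fin n, (if j < i then F i j else 0)) +
      ∑ i : Fin n, ∑ j : Fin n, (if i = j then F i j else 0) := by
    rw [← Finset.sum_add_distrib, ← Finset.sum_add_distrib]
    refine Finset.sum_congr rfl fun i _ => ?_
    rw [← Finset.sum_add_distrib, ← Finset.sum_add_distrib]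
    refine Finset.sum_congr rfl fun j _ => ?_
    rcases lt_trichotomy i j with h | h | h
    · simp [h, h.not_gt, h.ne]
    · simp [h]
    · simp [h, h.not_gt, h.ne']
  rw [h1, h3, h4, ← h2]; ring

lemma card_pairsF (n : ℕ) : ((pairsF n).card : ℝ) = n * (n - 1) / 2 := by
  have := sum_pairs_symm (n := n) (fun _ _ => 1) (fun _ _ => rfl)
  simp at this
  linarith

lemma neZero_pairs {n : ℕ} (hn : 2 ≤ n) : NeZero (pairsF n).card := by
  refine ⟨fun h => ?_⟩
  have := card_pairsF n
  rw [h] at this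
  have h2 : (2:ℝ) ≤ n := by exact_mod_cast hn
  have : (0:ℝ) < n * (n - 1) / 2 := by
    have : (0:ℝ) < n - 1 := by linarith
    positivity
  push_cast at *
  linarith

/-- potential for the infection. -/
def VA {n : ℕ} (A : Finset (Fin n)) : ℝ := n / A.card - 1

lemma sum_inf {n : ℕ} (A : Finset (Fin n)) (c : ℝ) [∀ e : Fin n × Fin n, Decidable (isInf e A)] :
    ∑ e ∈ pairsF n, (if isInf e A then c else 0) = A.card * (n - A.card) * c := by
  have h := sum_pairs_symm (n := n) (fun i j => if isInf (i, j) A then c else 0) (by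
    intro i j
    have : isInf (i, j) A ↔ isInf (j, i) A := by unfold isInf; simp only; tauto
    simp only [this])
  have h0 : ∑ i : Fin n, (if isInf (i, i) A then c else 0) = 0 := by
    refine Finset.sum_eq_zero fun i _ => ?_
    rw [if_neg]; unfold isInf; simp only; tauto
  have h1 : ∀ i j : Fin n, (if isInf (i, j) A then c else 0) =
      (if i ∈ A then 1 else 0) * c + (if j ∈ A then 1 else 0) * c
        - 2 * (if i ∈ A then 1 else 0) * (if j ∈ A then 1 else 0) * c := by
    intro i j
    by_cases hi : i ∈ A <;> by_cases hj : j ∈ A <;> simp [isInf, hi, hj] <;> ring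
  have hs : ∑ i : Fin n, (if i ∈ A then (1:ℝ) else 0) = A.card := by simp
  rw [h0] at h
  simp only [h1] at h
  simp only [Finset.sum_sub_distrib, Finset.sum_add_distrib, ← Finset.sum_mul, ← Finset.mul_sum,
    hs, Finset.sum_const, Finset.card_univ, Fintype.card_fin, nsmul_eq_mul] at h
  have h2 : ∑ e ∈ pairsF n, (if isInf e A then c else 0) =
      ∑ e ∈ pairsF n, ((if e.1 ∈ A then 1 else 0) * c + (if e.2 ∈ A then 1 else 0) * c
        - 2 * (if e.1 ∈ A then 1 else 0) * (if e.2 ∈ A then 1 else 0) * c) :=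
    Finset.sum_congr rfl fun e _ => h1 e.1 e.2
  rw [h2]
  simp only [Finset.sum_sub_distrib, Finset.sum_add_distrib, ← Finset.sum_mul] at h ⊢
  linarith

lemma card_infUpd {n : ℕ} (e : Fin n × Fin n) (A : Finset (Fin n)) (hI : isInf e A) :
    (infUpd e A).card = A.card + 1 := by
  unfold infUpd
  rcases hI with ⟨h1, h2⟩ | ⟨h1, h2⟩
  · rw [if_pos (Or.inl h1), Finset.insert_comm, Finset.insert_eq_of_mem (s := A) h1,
      Finset.card_insert_of_notMem h2]
  · rw [if_pos (Or.inr h2), Finset.insert_eq_of_mem (s := A) h2,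
      Finset.card_insert_of_notMem h1]

lemma infUpd_eq {n : ℕ} (e : Fin n × Fin n) (A : Finset (Fin n)) (hI : ¬ isInf e A) :
    infUpd e A = A := by
  unfold infUpd
  unfold isInf at hI
  split_ifs with h
  · have h1 : e.1 ∈ A := by tauto
    have h2 : e.2 ∈ A := by tauto
    rw [Finset.insert_eq_of_mem (s := A) h2, Finset.insert_eq_of_mem h1]
  · rfl

lemma VA_nonneg {n : ℕ} (A : Finset (Fin n)) (hA : A.Nonempty) : 0 ≤ VA A := by
  unfold VA
  have h1 : (0:ℝ) < A.card := by exact_mod_cast hA.card_pos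
  have h2 : (A.card : ℝ) ≤ n := by
    have := Finset.card_le_univ A
    rw [Fintype.card_fin] at this
    exact_mod_cast this
  have := (one_le_div h1).2 h2
  linarith

lemma VA_step {n : ℕ} (hn : 2 ≤ n) (A : Finset (Fin n)) (hA : A.Nonempty) :
    ∑ e ∈ pairsF n, VA (infUpd e A) ≤ (pairsF n).card * ((1 - 1 / ((n:ℝ) - 1)) * VA A) := by
  classical
  have h1 : (1:ℝ) ≤ A.card := by exact_mod_cast hA.card_pos
  have h2 : (A.card : ℝ) ≤ n := by
    have := Finset.card_le_univ A
    rw [Fintype.card_fin] at this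
    exact_mod_cast this
  have h3 : (2:ℝ) ≤ n := by exact_mod_cast hn
  have e1 : ∀ e ∈ pairsF n, VA (infUpd e A) = VA A + if isInf e A then
      (-(n:ℝ) / (A.card * (A.card + 1))) else 0 := by
    intro e _
    split_ifs with h
    · unfold VA; rw [card_infUpd e A h]; push_cast; field_simp; ring
    · rw [infUpd_eq e A h, add_zero]
  rw [Finset.sum_congr rfl e1, Finset.sum_add_distrib, sum_inf, Finset.sum_const, nsmul_eq_mul,
    card_pairsF]
  unfold VA
  set k : ℝ := (A.card : ℝ)
  have hn1 : (0:ℝ) < n - 1 := by linarith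
  have e2 : k * (n - k) * (-(n:ℝ) / (k * (k + 1))) = - (n * (n - k) / (k + 1)) := by
    field_simp
  have e3 : (n:ℝ) * (n - 1) / 2 * ((1 - 1 / ((n:ℝ) - 1)) * (n / k - 1)) =
      n * (n - 1) / 2 * (n / k - 1) - n * (n - k) / (2 * k) := by
    field_simp
  rw [e2, e3]
  have : (n:ℝ) * (n - k) / (2 * k) ≤ n * (n - k) / (k + 1) := by
    refine div_le_div_of_nonneg_left ?_ (by linarith) (by linarith)
    exact mul_nonneg (by linarith) (by linarith)
  linarith

lemma AS_nonempty {n : ℕ} (r : Fin n) (w : List (Fin n × Fin n)) : (AS r w).Nonempty := by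
  induction w with
  | nil => exact Finset.singleton_nonempty r
  | cons e w ih =>
    change (infUpd e (AS r w)).Nonempty
    unfold infUpd
    split_ifs
    · exact Finset.insert_nonempty _ _
    · exact ih

lemma card_inv_ofReal {n : ℕ} [NeZero (pairsF n).card] (F : Fin n × Fin n → ℝ)
    (hF : ∀ e ∈ pairsF n, 0 ≤ F e) {c : ℝ} (h : ∑ e ∈ pairsF n, F e ≤ (pairsF n).card * c) :
    ((pairsF n).card : ENNReal)⁻¹ * ∑ e ∈ pairsF n, ENNReal.ofReal (F e) ≤ ENNReal.ofReal c := by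
  have hc : (0:ℝ) < (pairsF n).card := by exact_mod_cast Nat.pos_of_ne_zero (NeZero.ne _)
  rw [← ENNReal.ofReal_sum_of_nonneg hF, ← ENNReal.ofReal_natCast, ← ENNReal.ofReal_inv_of_pos hc,
    ← ENNReal.ofReal_mul (by positivity)]
  refine ENNReal.ofReal_le_ofReal ?_
  rw [inv_mul_le_iff₀ hc]; exact h

lemma VA_avg {n : ℕ} (hn : 2 ≤ n) (r : Fin n) (T : ℕ) :
    Mavg n T (fun w => ENNReal.ofReal (VA (AS r w))) ≤
      ENNReal.ofReal ((1 - 1 / ((n:ℝ) - 1)) ^ T * (n - 1)) := by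
  have := neZero_pairs hn
  have h3 : (2:ℝ) ≤ n := by exact_mod_cast hn
  have h4 : 0 ≤ 1 - 1 / ((n:ℝ) - 1) := by
    rw [sub_nonneg, div_le_one (by linarith)]; linarith
  induction T with
  | zero =>
    refine ENNReal.ofReal_le_ofReal ?_
    simp [AS, VA]
  | succ T ih =>
    rw [Mavg_succ_back]
    calc _ ≤ Mavg n T (fun w => ENNReal.ofReal (1 - 1 / ((n:ℝ) - 1)) *
            ENNReal.ofReal (VA (AS r w))) := by
          refine Mavg_mono T fun w _ => ?_
          rw [← ENNReal.ofReal_mul h4]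
          refine card_inv_ofReal (fun e => VA (AS r (e :: w))) (fun e _ => ?_) ?_
          · exact VA_nonneg _ (AS_nonempty r _)
          · exact VA_step hn (AS r w) (AS_nonempty r w)
      _ ≤ _ := by
          rw [Mavg_const_mul, pow_succ', mul_assoc, ENNReal.ofReal_mul h4]
          exact mul_le_mul' le_rfl ih

lemma bad_le {n : ℕ} (hn : 2 ≤ n) (r : Fin n) (T : ℕ) :
    bad n r T ≤ ENNReal.ofReal (((n:ℝ) - 1) ^ 2 * (1 - 1 / ((n:ℝ) - 1)) ^ T) := by
  classical
  have h3 : (2:ℝ) ≤ n := by exact_mod_cast hn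
  unfold bad
  calc _ ≤ Mavg n T (fun w => ENNReal.ofReal (n - 1) * ENNReal.ofReal (VA (AS r w))) := by
        refine Mavg_mono T fun w _ => ?_
        split_ifs with h
        · exact zero_le
        · rw [← ENNReal.ofReal_mul (by linarith), ← ENNReal.ofReal_one]
          refine ENNReal.ofReal_le_ofReal ?_
          have h1 : (1:ℝ) ≤ (AS r w).card := by exact_mod_cast (AS_nonempty r w).card_pos
          have h2 : ((AS r w).card : ℝ) + 1 ≤ n := by
            have : (AS r w).card < n := by
              have := (Finset.card_lt_univ_of_notMem (s := AS r w) (x := ?_) ?_)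
              · rwa [Fintype.card_fin] at this
              · exact (not_forall.1 (fun h' => h (Finset.eq_univ_iff_forall.2 h'))).choose
              · exact (not_forall.1 (fun h' => h (Finset.eq_univ_iff_forall.2 h'))).choose_spec
            exact_mod_cast this
          unfold VA
          set k : ℝ := ((AS r w).card : ℝ)
          have : (n:ℝ) / k - 1 = (n - k) / k := by field_simp
          rw [this, ← mul_div_assoc, one_le_div (by linarith)]
          nlinarith
    _ ≤ _ := by
        rw [Mavg_const_mul]
        refine (mul_le_mul' le_rfl (VA_avg hn r T)).trans (le_of_eq ?_)
        rw [← ENNReal.ofReal_mul (by linarith)]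
        congr 1; ring

/-! ### First stage -/

lemma D2_upd_eq {n : ℕ} (x y : Fin n → ℝ) (i j : Fin n) (hij : i ≠ j) (l : ℝ) :
    D2 (upd x i j l) (upd y i j l) =
      ((1 - l) * (loI (x i + x j) - loI (y i + y j)) + l * (hiI (x i + x j) - hiI (y i + y j))) ^ 2
      + (l * (loI (x i + x j) - loI (y i + y j))
          + (1 - l) * (hiI (x i + x j) - hiI (y i + y j))) ^ 2
      + (D2 x y - (x i - y i) ^ 2 - (x j - y j) ^ 2) := by
  unfold D2
  rw [sum_upd i j hij x y l l (fun a b => (a - b) ^ 2), upd_i, upd_i, upd_j _ _ _ hij,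
    upd_j _ _ _ hij]
  ring

lemma lint_D2 {n : ℕ} (x y : Fin n → ℝ) (i j : Fin n) (hij : i ≠ j) {c : ℝ} (hc : 0 ≤ c) :
    ∫⁻ l in Set.Icc (0:ℝ) 1, ENNReal.ofReal (c * D2 (upd x i j l) (upd y i j l)) ≤
      ENNReal.ofReal (c * (D2 x y - (x i - y i) ^ 2 - (x j - y j) ^ 2
        + 2 / 3 * ((x i - y i) + (x j - y j)) ^ 2)) := by
  set a := loI (x i + x j) - loI (y i + y j) with ha
  set b := hiI (x i + x j) - hiI (y i + y j) with hb
  set K := D2 x y - (x i - y i) ^ 2 - (x j - y j) ^ 2 with hK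
  have hab : 0 ≤ a * b := lo_hi_mul_nonneg _ _
  have hs : a + b = (x i - y i) + (x j - y j) := by
    have h1 := lo_add_hi (x i + x j)
    have h2 := lo_add_hi (y i + y j)
    rw [ha, hb]; linarith
  have hfun : (fun l => c * D2 (upd x i j l) (upd y i j l)) =
      fun l => c * (a ^ 2 + b ^ 2 + K) - 2 * c * (a - b) ^ 2 * l + 2 * c * (a - b) ^ 2 * l ^ 2 := by
    funext l
    rw [D2_upd_eq x y i j hij l]; ring
  rw [← ofReal_integral_eq_lintegral_ofReal]
  · refine ENNReal.ofReal_le_ofReal ?_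
    have hInt0 : ∀ p q : ℝ, ∫ l in (0:ℝ)..1, (p - q * l + q * l ^ 2) = p - q / 2 + q / 3 := by
      intro p q
      have i1 : IntervalIntegrable (fun _ : ℝ => p) volume 0 1 := intervalIntegrable_const
      have i2 : IntervalIntegrable (fun l : ℝ => q * l) volume 0 1 :=
        Continuous.intervalIntegrable (by fun_prop) _ _
      have i3 : IntervalIntegrable (fun l : ℝ => q * l ^ 2) volume 0 1 :=
        Continuous.intervalIntegrable (by fun_prop) _ _
      rw [intervalIntegral.integral_add (i1.sub i2) i3, intervalIntegral.integral_sub i1 i2,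
        intervalIntegral.integral_const_mul, intervalIntegral.integral_const_mul, integral_id,
        integral_pow, intervalIntegral.integral_const]
      norm_num
      ring
    rw [hfun, integral_Icc_eq_integral_Ioc, ← intervalIntegral.integral_of_le zero_le_one,
      hInt0, ← hs]
    nlinarith [mul_nonneg hc hab]
  · rw [hfun]
    exact (Continuous.continuousOn (by fun_prop)).integrableOn_Icc
  · exact Filter.Eventually.of_forall fun l => mul_nonneg hc (D2_nonneg _ _)

lemma sum_E {n : ℕ} (hn : 2 ≤ n) {x y : Fin n → ℝ} (hx : x ∈ SV n) (hy : y ∈ SV n) :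
    ∑ e ∈ pairsF n, (D2 x y - (x e.1 - y e.1) ^ 2 - (x e.2 - y e.2) ^ 2
        + 2 / 3 * ((x e.1 - y e.1) + (x e.2 - y e.2)) ^ 2) ≤
      (pairsF n).card * ((1 - 2 / (3 * (n:ℝ))) * D2 x y) := by
  have h3 : (2:ℝ) ≤ n := by exact_mod_cast hn
  set d : Fin n → ℝ := fun k => x k - y k with hd
  have hs : ∑ k, d k = 0 := by rw [hd, Finset.sum_sub_distrib, hx.2, hy.2, sub_self]
  have hD : ∑ k, d k ^ 2 = D2 x y := rfl
  have h := sum_pairs_symm (n := n) (fun i j => D2 x y - d i ^ 2 - d j ^ 2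
    + 2 / 3 * (d i + d j) ^ 2) (by intro i j; ring)
  have e1 : ∀ i j : Fin n, D2 x y - d i ^ 2 - d j ^ 2 + 2 / 3 * (d i + d j) ^ 2 =
      D2 x y - 1 / 3 * d i ^ 2 - 1 / 3 * d j ^ 2 + 4 / 3 * d i * d j := by intro i j; ring
  have e2 : ∑ i, ∑ j, (D2 x y - d i ^ 2 - d j ^ 2 + 2 / 3 * (d i + d j) ^ 2) =
      (n:ℝ) ^ 2 * D2 x y - 2 / 3 * n * D2 x y := by
    simp only [e1, Finset.sum_sub_distrib, Finset.sum_add_distrib, ← Finset.sum_mul,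
      ← Finset.mul_sum, hs, hD, Finset.sum_const, Finset.card_univ, Fintype.card_fin, nsmul_eq_mul]
    ring
  have e3 : ∑ i, (D2 x y - d i ^ 2 - d i ^ 2 + 2 / 3 * (d i + d i) ^ 2) =
      n * D2 x y + 2 / 3 * D2 x y := by
    have : ∀ i : Fin n, D2 x y - d i ^ 2 - d i ^ 2 + 2 / 3 * (d i + d i) ^ 2 =
      D2 x y + 2 / 3 * d i ^ 2 := by intro i; ring
    simp only [this, Finset.sum_add_distrib, 
      ← Finset.mul_sum, hD, Finset.sum_const, Finset.card_univ, Fintype.card_fin, nsmul_eq_mul]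
  rw [e2, e3] at h
  change ∑ e ∈ pairsF n, (D2 x y - d e.1 ^ 2 - d e.2 ^ 2 + 2 / 3 * (d e.1 + d e.2) ^ 2) ≤ _
  rw [card_pairsF]
  have e4 : (n:ℝ) * (n - 1) / 2 * ((1 - 2 / (3 * (n:ℝ))) * D2 x y) =
      (n * (n - 1) / 2 - (n - 1) / 3) * D2 x y := by field_simp
  rw [e4]
  have := D2_nonneg x y
  nlinarith

lemma E_nonneg {n : ℕ} (x y : Fin n → ℝ) (i j : Fin n) (hij : i ≠ j) :
    0 ≤ D2 x y - (x i - y i) ^ 2 - (x j - y j) ^ 2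
        + 2 / 3 * ((x i - y i) + (x j - y j)) ^ 2 := by
  unfold D2
  rw [sum_pair i j hij]
  have : 0 ≤ ∑ k ∈ (Finset.univ.erase i).erase j, (x k - y k) ^ 2 :=
    Finset.sum_nonneg fun _ _ => sq_nonneg _
  nlinarith [sq_nonneg ((x i - y i) + (x j - y j))]

lemma PP_contract {n : ℕ} (hn : 2 ≤ n) {g h : (Fin n → ℝ) → ENNReal} (hh : Measurable h)
    {c1 : ℝ} (hc1 : 0 ≤ c1) (c : ENNReal)
    (hgh : ∀ x ∈ SV n, ∀ y ∈ SV n, g x ≤ h y + (ENNReal.ofReal (c1 * D2 x y) + c))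
    (x : Fin n → ℝ) (hx : x ∈ SV n) (y : Fin n → ℝ) (hy : y ∈ SV n) :
    PP n g x ≤ PP n h y + (ENNReal.ofReal (c1 * (1 - 2 / (3 * (n:ℝ))) * D2 x y) + c) := by
  have := neZero_pairs hn
  have key : ∀ e ∈ pairsF n, KK e g x ≤ KK e h y + (ENNReal.ofReal (c1 *
      (D2 x y - (x e.1 - y e.1) ^ 2 - (x e.2 - y e.2) ^ 2
        + 2 / 3 * ((x e.1 - y e.1) + (x e.2 - y e.2)) ^ 2)) + c) := by
    intro e he
    have hij := pairsF_ne he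
    have m : Measurable fun l => upd y e.1 e.2 l :=
      (measurable_upd e.1 e.2).comp (measurable_const.prodMk measurable_id)
    calc KK e g x ≤ ∫⁻ l in Set.Icc (0:ℝ) 1, (h (upd y e.1 e.2 l) +
          (ENNReal.ofReal (c1 * D2 (upd x e.1 e.2 l) (upd y e.1 e.2 l)) + c)) :=
          setLIntegral_mono' measurableSet_Icc fun l hl =>
            hgh _ (upd_mem hx _ _ hij hl) _ (upd_mem hy _ _ hij hl)
      _ = KK e h y + ((∫⁻ l in Set.Icc (0:ℝ) 1,
          ENNReal.ofReal (c1 * D2 (upd x e.1 e.2 l) (upd y e.1 e.2 l))) + c) := by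
          rw [lintegral_add_left (f := fun l => h (upd y e.1 e.2 l)) (hh.comp m),
            lintegral_add_right _ measurable_const]
          simp [KK]
      _ ≤ _ := add_le_add le_rfl (add_le_add (lint_D2 x y _ _ hij hc1) le_rfl)
  unfold PP
  calc _ ≤ ((pairsF n).card : ENNReal)⁻¹ * ∑ e ∈ pairsF n, (KK e h y + (ENNReal.ofReal (c1 *
      (D2 x y - (x e.1 - y e.1) ^ 2 - (x e.2 - y e.2) ^ 2
        + 2 / 3 * ((x e.1 - y e.1) + (x e.2 - y e.2)) ^ 2)) + c)) :=
        mul_le_mul' le_rfl (Finset.sum_le_sum key)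
    _ = ((pairsF n).card : ENNReal)⁻¹ * ∑ e ∈ pairsF n, KK e h y +
        (((pairsF n).card : ENNReal)⁻¹ * ∑ e ∈ pairsF n, ENNReal.ofReal (c1 *
      (D2 x y - (x e.1 - y e.1) ^ 2 - (x e.2 - y e.2) ^ 2
        + 2 / 3 * ((x e.1 - y e.1) + (x e.2 - y e.2)) ^ 2)) +
        ((pairsF n).card : ENNReal)⁻¹ * ∑ _e ∈ pairsF n, c) := by
        rw [Finset.sum_add_distrib, Finset.sum_add_distrib, mul_add, mul_add]
    _ ≤ _ := by
        rw [card_inv_mul]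
        refine add_le_add le_rfl (add_le_add (card_inv_ofReal _ (fun e he =>
          mul_nonneg hc1 (E_nonneg x y _ _ (pairsF_ne he))) ?_) le_rfl)
        rw [← Finset.mul_sum]
        have := mul_le_mul_of_nonneg_left (sum_E hn hx hy) hc1
        linarith

lemma PP_contract_iter {n : ℕ} (hn : 2 ≤ n) (T : ℕ) {g h : (Fin n → ℝ) → ENNReal}
    (hh : Measurable h)
    {c1 : ℝ} (hc1 : 0 ≤ c1) (c : ENNReal)
    (hgh : ∀ x ∈ SV n, ∀ y ∈ SV n, g x ≤ h y + (ENNReal.ofReal (c1 * D2 x y) + c))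
    (x : Fin n → ℝ) (hx : x ∈ SV n) (y : Fin n → ℝ) (hy : y ∈ SV n) :
    (PP n)^[T] g x ≤ (PP n)^[T] h y +
      (ENNReal.ofReal (c1 * (1 - 2 / (3 * (n:ℝ))) ^ T * D2 x y) + c) := by
  have h3 : (2:ℝ) ≤ n := by exact_mod_cast hn
  have h4 : 0 ≤ 1 - 2 / (3 * (n:ℝ)) := by
    rw [sub_nonneg, div_le_one (by linarith)]; linarith
  induction T generalizing x y with
  | zero => simpa using hgh x hx y hy
  | succ T ih =>
    rw [Function.iterate_succ_apply', Function.iterate_succ_apply']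
    have := PP_contract hn (measurable_PP_iter T hh) (c1 := c1 * (1 - 2 / (3 * (n:ℝ))) ^ T)
      (by positivity) c ih x hx y hy
    rw [pow_succ, ← mul_assoc]
    exact this

lemma D2_le {n : ℕ} {x y : Fin n → ℝ} (hx : x ∈ SV n) (hy : y ∈ SV n) : D2 x y ≤ 4 * n := by
  unfold D2
  calc _ ≤ ∑ _k : Fin n, (4:ℝ) := by
        refine Finset.sum_le_sum fun k _ => ?_
        have h1 := hx.1 k
        have h2 := hy.1 k
        nlinarith [h1.1, h1.2, h2.1, h2.2]
    _ = _ := by simp; ring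

lemma D1_le {n : ℕ} (x y : Fin n → ℝ) {α : ℝ} (hα : 0 < α) :
    D1 x y ≤ α / 2 * D2 x y + n / (2 * α) := by
  unfold D1 D2
  calc _ ≤ ∑ k : Fin n, (α / 2 * (x k - y k) ^ 2 + 1 / (2 * α)) := by
        refine Finset.sum_le_sum fun k _ => ?_
        rw [← sq_abs]
        set t := |x k - y k|
        have : α / 2 * t ^ 2 + 1 / (2 * α) - t = (α * t - 1) ^ 2 / (2 * α) := by
          field_simp; ring
        have h2 : 0 ≤ (α * t - 1) ^ 2 / (2 * α) := by positivity
        linarith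
    _ = _ := by
        rw [Finset.sum_add_distrib, ← Finset.mul_sum]
        simp; ring

lemma combined {n : ℕ} (hn : 2 ≤ n) (r : Fin n) {η α : ℝ} (hη : 0 < η) (hα : 0 < α)
    {f : (Fin n → ℝ) → ENNReal}
    (hf : Measurable f) (hf1 : ∀ z, f z ≤ 1) (T1 T2 : ℕ) (x : Fin n → ℝ) (hx : x ∈ SV n) :
    (PP n)^[T1 + T2] f x ≤ (∫⁻ y, f y ∂UV n) + ENNReal.ofReal (n * (2 * η) +
      (n / η * (α / 2) * (1 - 2 / (3 * (n:ℝ))) ^ T1 * (4 * n) + (n / η * (n / (2 * α)) +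
        ((n:ℝ) - 1) ^ 2 * (1 - 1 / ((n:ℝ) - 1)) ^ T2))) := by
  have := neZero_pairs hn
  have := UV_prob (n := n) (by omega)
  have h3 : (2:ℝ) ≤ n := by exact_mod_cast hn
  have h4 : 0 ≤ 1 - 2 / (3 * (n:ℝ)) := by
    rw [sub_nonneg, div_le_one (by linarith)]; linarith
  have h5 : 0 ≤ 1 - 1 / ((n:ℝ) - 1) := by
    rw [sub_nonneg, div_le_one (by linarith)]; linarith
  set c : ENNReal := ENNReal.ofReal (n / η * (n / (2 * α)) +
        ((n:ℝ) - 1) ^ 2 * (1 - 1 / ((n:ℝ) - 1)) ^ T2) with hcdef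
  set h : (Fin n → ℝ) → ENNReal := fun y => (PP n)^[T2] f y + Mavg n T2 (fun w => QQ r η w y)
    with hh
  have mQ : Measurable fun y => Mavg n T2 (fun w => QQ r η w y) :=
    measurable_Mavg T2 fun w => measurable_QQ r η w
  have hm : Measurable h := (measurable_PP_iter T2 hf).add mQ
  have hgh : ∀ x ∈ SV n, ∀ y ∈ SV n, (PP n)^[T2] f x ≤
      h y + (ENNReal.ofReal (n / η * (α / 2) * D2 x y) + c) := by
    intro x hx y hy
    refine (stage_two_avg r hη hf hf1 T2 x y hx hy).trans (add_le_add le_rfl ?_)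
    refine (add_le_add le_rfl (bad_le hn r T2)).trans ?_
    rw [← ENNReal.ofReal_natCast, ← ENNReal.ofReal_mul (by positivity),
      ← ENNReal.ofReal_add (mul_nonneg (by positivity) (div_nonneg (D1_nonneg x y) hη.le))
        (by positivity),
      ← ENNReal.ofReal_add (mul_nonneg (by positivity) (D2_nonneg x y)) (by positivity)]
    refine ENNReal.ofReal_le_ofReal ?_
    have := mul_le_mul_of_nonneg_left (D1_le x y hα) (by positivity : 0 ≤ (n:ℝ) / η)
    have e : (n:ℝ) * (D1 x y / η) = n / η * D1 x y := by ring
    rw [e]; linarith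
  have main := PP_contract_iter hn T1 hm (by positivity) c hgh x hx
  have hconst : (PP n)^[T1 + T2] f x = ∫⁻ _y, (PP n)^[T1 + T2] f x ∂UV n := by simp
  rw [hconst]
  calc ∫⁻ _y, (PP n)^[T1 + T2] f x ∂UV n
      ≤ ∫⁻ y, ((PP n)^[T1] h y + (ENNReal.ofReal (n / η * (α / 2) *
          (1 - 2 / (3 * (n:ℝ))) ^ T1 * (4 * n)) + c)) ∂UV n := by
        refine lintegral_mono_ae ?_
        filter_upwards [UV_supp n] with y hy
        rw [Function.iterate_add_apply]
        refine (main y hy).trans (add_le_add le_rfl (add_le_add (ENNReal.ofReal_le_ofReal ?_) le_rfl))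
        exact mul_le_mul_of_nonneg_left (D2_le hx hy) (by positivity)
    _ = ((∫⁻ y, f y ∂UV n) + ∫⁻ y, Mavg n T2 (fun w => QQ r η w y) ∂UV n) +
        (ENNReal.ofReal (n / η * (α / 2) *
          (1 - 2 / (3 * (n:ℝ))) ^ T1 * (4 * n)) + c) := by
        rw [lintegral_add_right _ measurable_const, UV_PP_iter T1 hm, hh,
          lintegral_add_right _ mQ, UV_PP_iter T2 hf]
        simp
    _ ≤ ((∫⁻ y, f y ∂UV n) + (n : ENNReal) * ENNReal.ofReal (2 * η)) +
        (ENNReal.ofReal (n / η * (α / 2) *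
          (1 - 2 / (3 * (n:ℝ))) ^ T1 * (4 * n)) + c) :=
        add_le_add (add_le_add le_rfl (QQ_avg_int r hη T2)) le_rfl
    _ = _ := by
        rw [hcdef, ← ENNReal.ofReal_natCast, ← ENNReal.ofReal_mul (by positivity),
          ← ENNReal.ofReal_add (by positivity) (by positivity), add_assoc,
          ← ENNReal.ofReal_add (by positivity) (by positivity)]

lemma numerics (n : ℕ) (C : ℝ) (hC : 23 < C) (hn : (4096:ℝ) < n) (T : ℕ)
    (hT : C * n * Real.log n < (T : ℝ)) :
    ∃ T1 T2 : ℕ, T1 + T2 = T ∧ ∃ η α : ℝ, 0 < η ∧ 0 < α ∧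
      (n * (2 * η) +
      (n / η * (α / 2) * (1 - 2 / (3 * (n:ℝ))) ^ T1 * (4 * n) + (n / η * (n / (2 * α)) +
        ((n:ℝ) - 1) ^ 2 * (1 - 1 / ((n:ℝ) - 1)) ^ T2))) ≤
      11 * (n : ℝ) ^ (-C / 11 + 19 / 44) := by
  have hn0 : (0:ℝ) < n := by linarith
  set L := Real.log n with hL
  have hL1 : 1 ≤ L := by
    rw [hL, Real.le_log_iff_exp_le hn0]
    linarith [Real.exp_one_lt_d9]
  have hnL : (n:ℝ) = Real.exp L := (Real.exp_log hn0).symm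
  set N : ℝ := (n:ℝ) with hN
  have hCNL : 6 ≤ C * N * L := by
    have : 23 * 4096 ≤ C * N := by nlinarith
    nlinarith
  set T1 := ⌈5 / 6 * (C * N * L)⌉₊ with hT1
  have h1 : 5 / 6 * (C * N * L) ≤ T1 := Nat.le_ceil _
  have h2 : (T1:ℝ) < 5 / 6 * (C * N * L) + 1 := Nat.ceil_lt_add_one (by linarith)
  have h3 : T1 ≤ T := by
    have : (T1:ℝ) ≤ T := by linarith
    exact_mod_cast this
  refine ⟨T1, T - T1, by omega, ?_⟩
  set T2 := T - T1 with hT2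
  have h4 : (T2:ℝ) = T - T1 := by rw [hT2, Nat.cast_sub h3]
  have h5 : C * N * L / 6 - 1 ≤ T2 := by rw [h4]; linarith
  have b1 : (1 - 2 / (3 * N)) ^ T1 ≤ Real.exp (-(5 / 9) * C * L) := by
    have h0 : 0 ≤ 1 - 2 / (3 * N) := by
      rw [sub_nonneg, div_le_one (by linarith)]; linarith
    calc (1 - 2 / (3 * N)) ^ T1 ≤ (Real.exp (-(2 / (3 * N)))) ^ T1 :=
          pow_le_pow_left₀ h0 (by linarith [Real.add_one_le_exp (-(2 / (3 * N)))]) _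
      _ = Real.exp (T1 * -(2 / (3 * N))) := (Real.exp_nat_mul _ _).symm
      _ ≤ _ := by
          refine Real.exp_le_exp.2 ?_
          have : 5 / 6 * (C * N * L) * (2 / (3 * N)) ≤ T1 * (2 / (3 * N)) :=
            mul_le_mul_of_nonneg_right h1 (by positivity)
          have e : 5 / 6 * (C * N * L) * (2 / (3 * N)) = 5 / 9 * C * L := by field_simp; norm_num
          linarith
  have b2 : (N - 1) ^ 2 * (1 - 1 / (N - 1)) ^ T2 ≤ 3 * Real.exp (2 * L - 1 / 6 * C * L) := by
    have h0 : 0 ≤ 1 - 1 / (N - 1) := by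
      rw [sub_nonneg, div_le_one (by linarith)]; linarith
    have h01 : 1 - 1 / (N - 1) ≤ 1 - 1 / N := by
      have : 1 / N ≤ 1 / (N - 1) := one_div_le_one_div_of_le (by linarith) (by linarith)
      linarith
    have hp : (1 - 1 / (N - 1)) ^ T2 ≤ 3 * Real.exp (- (1 / 6 * C * L)) := by
      calc (1 - 1 / (N - 1)) ^ T2 ≤ (Real.exp (-(1 / N))) ^ T2 :=
          pow_le_pow_left₀ h0 (by linarith [Real.add_one_le_exp (-(1 / N))]) _
        _ = Real.exp (T2 * -(1 / N)) := (Real.exp_nat_mul _ _).symm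
        _ ≤ Real.exp (1 + -(1 / 6 * C * L)) := by
          refine Real.exp_le_exp.2 ?_
          have : (C * N * L / 6 - 1) * (1 / N) ≤ T2 * (1 / N) :=
            mul_le_mul_of_nonneg_right h5 (by positivity)
          have e : (C * N * L / 6 - 1) * (1 / N) = 1 / 6 * C * L - 1 / N := by field_simp
          have e2 : 1 / N ≤ 1 := by rw [div_le_one hn0]; linarith
          linarith
        _ ≤ _ := by
          rw [Real.exp_add]
          exact mul_le_mul_of_nonneg_right (by linarith [Real.exp_one_lt_d9]) (Real.exp_pos _).le
    have hq : (N - 1) ^ 2 ≤ Real.exp (2 * L) := by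
      have : Real.exp (2 * L) = N ^ 2 := by rw [hnL, ← Real.exp_nat_mul]; norm_num
      rw [this]
      exact pow_le_pow_left₀ (by linarith) (by linarith) _
    calc _ ≤ Real.exp (2 * L) * (3 * Real.exp (- (1 / 6 * C * L))) :=
          mul_le_mul hq hp (by positivity) (by positivity)
      _ = _ := by rw [sub_eq_add_neg, Real.exp_add]; ring
  set ρ := Real.exp (-(5 / 18) * C * L) with hρ
  have hρ0 : 0 < ρ := Real.exp_pos _
  have hρ2 : Real.exp (-(5 / 9) * C * L) = ρ ^ 2 := by
    rw [hρ, ← Real.exp_nat_mul]; congr 1; push_cast; ring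
  set η := Real.exp (1 / 2 * L - 5 / 36 * C * L) with hη
  have hη0 : 0 < η := Real.exp_pos _
  have hη2 : η ^ 2 = N * ρ := by
    rw [hη, hρ, hnL, ← Real.exp_nat_mul, ← Real.exp_add]; congr 1; push_cast; ring
  have hR : N ^ (-C / 11 + 19 / 44) = Real.exp (L * (-C / 11 + 19 / 44)) := by
    rw [Real.rpow_def_of_pos hn0]
  have c1 : N * η ≤ Real.exp (L * (-C / 11 + 19 / 44)) := by
    have : N * η = Real.exp (L + (1 / 2 * L - 5 / 36 * C * L)) := by
      rw [Real.exp_add, ← hnL]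
    rw [this]
    refine Real.exp_le_exp.2 ?_
    nlinarith
  have c2 : Real.exp (2 * L - 1 / 6 * C * L) ≤ Real.exp (L * (-C / 11 + 19 / 44)) := by
    refine Real.exp_le_exp.2 ?_
    nlinarith
  refine ⟨η, 1 / (2 * ρ), hη0, by positivity, ?_⟩
  rw [hρ2] at b1
  have t1 : N / η * (1 / (2 * ρ) / 2) * (1 - 2 / (3 * N)) ^ T1 * (4 * N) ≤ N * η := by
    calc _ ≤ N / η * (1 / (2 * ρ) / 2) * ρ ^ 2 * (4 * N) := by gcongr
      _ = N * (N * ρ) / η := by field_simp; ring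
      _ = N * η := by rw [← hη2]; field_simp
  have t2 : N / η * (N / (2 * (1 / (2 * ρ)))) = N * η := by
    calc _ = N * (N * ρ) / η := by field_simp
      _ = N * η := by rw [← hη2]; field_simp
  rw [hR, t2]
  linarith [Real.exp_pos (L * (-C / 11 + 19 / 44))]

lemma MSet_Phi {n : ℕ} {x : Fin n × Fin 2 → ℝ} (hx : x ∈ MSet n) :
    ∃ z ∈ SV n, Phi z = x := by
  obtain ⟨h0, h1, h2⟩ := hx
  refine ⟨fun i => x (i, 0), ⟨fun i => ⟨h0 _, ?_⟩, h2 0⟩, ?_⟩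
  · linarith [h1 i, h0 (i, 1)]
  · funext p
    obtain ⟨k, c⟩ := p
    fin_cases c
    · simp [Phi]
    · simp [Phi]; linarith [h1 k]

/-- Convergence rate (upper bound) for the Gibbs sampler on narrow matrices. -/
theorem gibbs_sampler_narrow_matrices_upper_bound
    (n : ℕ) (C a : ℝ) (hC : 23 < C) (haC : a = 2 / 11 * (C + 18.25))
    (hn1 : max 4096 (2 / 11 * C + 75 / 11) < (n : ℝ))
    (hn2 : 6 * (2 * a - 13) * (a - 7) / (2 * a - 15) < (n : ℝ) / Real.log n)
    (x : Fin n × Fin 2 → ℝ) (hx : x ∈ MSet n)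
    (T : ℕ) (hT : C * n * Real.log n < (T : ℝ)) :
    tvDist (lawM n x T) (UM n) ≤ 11 * (n : ℝ) ^ (-C / 11 + 19 / 44) := by
  have hn : (4096:ℝ) < n := lt_of_le_of_lt (le_max_left _ _) hn1
  have hn' : 4096 < n := by exact_mod_cast hn
  have hn2' : 2 ≤ n := by omega
  have := neZero_pairs hn2'
  have := UV_prob (n := n) (by omega)
  obtain ⟨z, hz, rfl⟩ := MSet_Phi hx
  obtain ⟨T1, T2, hTT, η, α, hη, hα, hle⟩ := numerics n C hC hn T hT
  have : Nonempty {A : Set (Fin n × Fin 2 → ℝ) // MeasurableSet A} := ⟨⟨∅, MeasurableSet.empty⟩⟩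
  unfold tvDist
  refine ciSup_le fun A => ?_
  obtain ⟨A, hA⟩ := A
  set f : (Fin n × Fin 2 → ℝ) → ENNReal := A.indicator 1 with hf
  have hfm : Measurable f := measurable_one.indicator hA
  have hf1 : ∀ w, (f ∘ Phi) w ≤ 1 := by
    intro w
    exact Set.indicator_le_self' (fun _ _ => zero_le) _
  have hlaw : lawM n (Phi z) T A = (PP n)^[T] (f ∘ Phi) z := by
    rw [← lintegral_lawM n T z hfm, hf, lintegral_indicator_one hA]
  have hU : UM n A = ∫⁻ y, (f ∘ Phi) y ∂UV n := by
    rw [← map_Phi_UV (by omega), ← lintegral_indicator_one hA, lintegral_map hfm measurable_Phi]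
    rfl
  have main := combined hn2' ⟨0, by omega⟩ hη hα (hfm.comp measurable_Phi) hf1 T1 T2 z hz
  rw [hTT, ← hlaw, ← hU] at main
  have main2 := main.trans (add_le_add le_rfl (ENNReal.ofReal_le_ofReal hle))
  have hfin : UM n A ≠ ⊤ := by
    rw [hU]
    refine ne_top_of_le_ne_top ENNReal.one_ne_top ?_
    calc _ ≤ ∫⁻ _y, (1:ENNReal) ∂UV n := lintegral_mono hf1
      _ = 1 := by simp
  have h0 : 0 ≤ 11 * (n : ℝ) ^ (-C / 11 + 19 / 44) := by positivity
  have := ENNReal.toReal_mono (ENNReal.add_ne_top.2 ⟨hfin, ENNReal.ofReal_ne_top⟩) main2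
  rw [ENNReal.toReal_add hfin ENNReal.ofReal_ne_top, ENNReal.toReal_ofReal h0] at this
  change (lawM n (Phi z) T A).toReal - (UM n A).toReal ≤ _
  linarith

end
end

section
/- Let (X_t) be the Gibbs sampler on M_n started from a fixed x ∈ M_n, driven by i.i.d. uniform update pairs (i_s, j_s) with 1 ≤ i_s < j_s ≤ n and independent uniform variables λ_s ∈ [0,1]. Let τ be the first time t such that every index in {1,…,n} occurs in some pair (i_s, j_s) with s < t. Then for every t ≥ 0, ‖L(X_t) − U_n‖_TV ≥ P[τ > t]. -/
open MeasureTheory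

noncomputable section

theorem stepM_measurable (n : ℕ) :
    Measurable (fun q : (Fin n × Fin 2 → ℝ) × ((Fin n × Fin n) × ℝ) => stepM n q.1 q.2) := by
  have key : Measurable (fun q : (Fin n × Fin n) × ((Fin n × Fin 2 → ℝ) × ℝ) =>
      stepM n q.2.1 (q.1, q.2.2)) := by
    refine measurable_from_prod_countable_right fun ij => ?_
    refine measurable_pi_iff.2 fun p => ?_
    have hi : Measurable (fun q : (Fin n × Fin 2 → ℝ) × ℝ => q.1 (ij.1, 0)) :=
      (measurable_pi_apply _).comp measurable_fst
    have hj : Measurable (fun q : (Fin n × Fin 2 → ℝ) × ℝ => q.1 (ij.2, 0)) :=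
      (measurable_pi_apply _).comp measurable_fst
    have hp : Measurable (fun q : (Fin n × Fin 2 → ℝ) × ℝ => q.1 p) :=
      (measurable_pi_apply _).comp measurable_fst
    have hs : MeasurableSet {q : (Fin n × Fin 2 → ℝ) × ℝ |
        0 ≤ 2 - q.1 (ij.1, 0) - q.1 (ij.2, 0)} :=
      measurableSet_le measurable_const ((measurable_const.sub hi).sub hj)
    unfold stepM
    dsimp only
    split_ifs
    · exact Measurable.ite hs (by fun_prop) (by fun_prop)
    · exact Measurable.ite hs (by fun_prop) (by fun_prop)
    · exact Measurable.ite hs (by fun_prop) (by fun_prop)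
    · exact Measurable.ite hs (by fun_prop) (by fun_prop)
    · exact hp
  exact key.comp (by fun_prop :
    Measurable (fun q : (Fin n × Fin 2 → ℝ) × ((Fin n × Fin n) × ℝ) =>
      (q.2.1, (q.1, q.2.2))))

theorem foldM_measurable (n T : ℕ) :
    Measurable (fun q : (Fin n × Fin 2 → ℝ) × (Fin T → (Fin n × Fin n) × ℝ) =>
      (List.ofFn q.2).foldl (stepM n) q.1) := by
  induction T with
  | zero => simpa using measurable_fst
  | succ T ih =>
    simp only [List.ofFn_succ, List.foldl_cons]
    have h1 : Measurable (fun q : (Fin n × Fin 2 → ℝ) × (Fin (T+1) → (Fin n × Fin n) × ℝ) =>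
        (stepM n q.1 (q.2 0), fun i : Fin T => q.2 i.succ)) := by
      refine Measurable.prodMk ?_ (by fun_prop)
      exact (stepM_measurable n).comp (by fun_prop :
        Measurable (fun q : (Fin n × Fin 2 → ℝ) × (Fin (T+1) → (Fin n × Fin n) × ℝ) =>
          (q.1, q.2 0)))
    exact ih.comp h1

theorem foldM_coord (n : ℕ) (i : Fin n) (L : List ((Fin n × Fin n) × ℝ))
    (hL : ∀ u ∈ L, u.1.1 ≠ i ∧ u.1.2 ≠ i) (x : Fin n × Fin 2 → ℝ) :
    L.foldl (stepM n) x (i, 0) = x (i, 0) := by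
  induction L generalizing x with
  | nil => rfl
  | cons u L ih =>
    rw [List.foldl_cons, ih (fun v hv => hL v (List.mem_cons_of_mem _ hv))]
    obtain ⟨h1, h2⟩ := hL u List.mem_cons_self
    simp [stepM, h1.symm, h2.symm]

theorem sliceM_null (n : ℕ) (hn : 2 ≤ n) (i : Fin n) (c : ℝ) :
    μH[(n : ℝ) - 1] ({y | y (i, 0) = c} ∩ MSet n) = 0 := by
  classical
  have : Nontrivial (Fin n) := Fin.nontrivial_iff_two_le.2 hn
  obtain ⟨k, hk⟩ := exists_ne i
  let S := {j : Fin n // j ≠ i ∧ j ≠ k}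
  let g : (S → ℝ) → Fin n → ℝ := fun z j =>
    if h : j ≠ i ∧ j ≠ k then z ⟨j, h⟩ else if j = i then c else n - c - ∑ s, z s
  let f : (S → ℝ) → Fin n × Fin 2 → ℝ := fun z p =>
    if p.2 = 0 then g z p.1 else 2 - g z p.1
  have hg : ∀ j, ContDiff ℝ 1 (fun z => g z j) := by
    intro j
    simp only [g]
    split_ifs <;> fun_prop
  have hf : ContDiff ℝ 1 f := by
    refine contDiff_pi.2 fun p => ?_
    simp only [f]
    split_ifs
    · exact hg _
    · exact contDiff_const.sub (hg _)
  have hcard : Module.finrank ℝ (S → ℝ) + 2 = n := by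
    rw [Module.finrank_fintype_fun_eq_card]
    have : Fintype.card S = (Finset.univ \ {i, k} : Finset (Fin n)).card := by
      rw [Fintype.card_subtype]
      congr 1
      ext j
      simp
    rw [this, Finset.card_sdiff_of_subset (Finset.subset_univ _), Finset.card_pair hk.symm]
    simp
    omega
  have hsub : {y | y (i, 0) = c} ∩ MSet n ⊆ Set.range f := by
    rintro y ⟨hy, -, hrow, hcol⟩
    have hy : y (i, 0) = c := hy
    have hgy : ∀ j, g (fun s => y (s.1, 0)) j = y (j, 0) := by
      intro j
      simp only [g]
      split_ifs with h1 h2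
      · rfl
      · rw [h2, hy]
      · have hjk : j = k := by
          by_contra hh
          exact h1 ⟨h2, hh⟩
        subst hjk
        have h0 := hcol 0
        have e : ∑ s : S, y (s.1, 0) = ∑ s ∈ (Finset.univ.erase i).erase j, y (s, 0) := by
          symm
          apply Finset.sum_subtype
          intro s
          simp [and_comm]
        rw [← Finset.add_sum_erase _ _ (Finset.mem_univ i),
          ← Finset.add_sum_erase _ _ (Finset.mem_erase.2 ⟨hk, Finset.mem_univ j⟩)] at h0
        rw [e]
        linarith
    refine ⟨fun s => y (s.1, 0), ?_⟩
    funext ⟨j, b⟩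
    simp only [f, hgy]
    have := hrow j
    fin_cases b
    · simp
    · simp
      linarith
  have hdim : dimH ({y | y (i, 0) = c} ∩ MSet n) ≤ (Module.finrank ℝ (S → ℝ) : ENNReal) :=
    (dimH_mono hsub).trans hf.dimH_range_le
  have hlt : dimH ({y | y (i, 0) = c} ∩ MSet n) <
      (((Module.finrank ℝ (S → ℝ) : NNReal) + 1 : NNReal) : ENNReal) := by
    refine hdim.trans_lt ?_
    push_cast
    exact ENNReal.lt_add_right (by simp) one_ne_zero
  have := hausdorffMeasure_of_dimH_lt hlt
  have h2 : ((Module.finrank ℝ (S → ℝ) + 2 : ℕ) : ℝ) = n := by exact_mod_cast hcard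
  have he : (n : ℝ) - 1 = (((Module.finrank ℝ (S → ℝ) : NNReal) + 1 : NNReal) : ℝ) := by
    push_cast at h2 ⊢
    linarith
  rw [he]
  exact this

theorem unifOn_finite {α : Type*} [MeasurableSpace α] (s : Finset α) :
    IsFiniteMeasure (unifOn s) := by
  constructor
  unfold unifOn
  rcases s.eq_empty_or_nonempty with rfl | h
  · simp
  · rw [Measure.smul_apply, smul_eq_mul]
    refine ENNReal.mul_lt_top ?_ (measure_lt_top _ _)
    simpa using h

/-- Coupon-collector lower bound for the Gibbs sampler on narrow matrices:
the total variation distance to stationarity at time `t` is at least the probability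
that some row index has not yet been chosen in any update pair before time `t`. -/
theorem gibbs_sampler_narrow_matrices_coupon_lower_bound
    (n : ℕ) (hn : 2 ≤ n) (x : Fin n × Fin 2 → ℝ) (hx : x ∈ MSet n) (t : ℕ) :
    ((Measure.pi fun _ : Fin t => driveM n)
        {ω | ∃ i : Fin n, ∀ s : Fin t, (ω s).1.1 ≠ i ∧ (ω s).1.2 ≠ i}).toReal ≤
      tvDist (lawM n x t) (UM n) := by
  have := unifOn_finite (pairsF n)
  have : IsFiniteMeasure (driveM n) := by
    unfold driveM
    infer_instance
  have hmeas : Measurable (fun ω : Fin t → (Fin n × Fin n) × ℝ =>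
      (List.ofFn ω).foldl (stepM n) x) :=
    (foldM_measurable n t).comp measurable_prodMk_left
  have : IsFiniteMeasure (lawM n x t) := by
    unfold lawM
    infer_instance
  let A : Set (Fin n × Fin 2 → ℝ) := ⋃ i : Fin n, {y | y (i, 0) = x (i, 0)}
  have hA : MeasurableSet A := MeasurableSet.iUnion fun i =>
    measurableSet_eq_fun (measurable_pi_apply _) measurable_const
  have hU : UM n A = 0 := by
    unfold UM
    rw [Measure.smul_apply, Measure.restrict_apply hA, Set.iUnion_inter,
      measure_iUnion_null fun i => sliceM_null n hn i _, smul_zero]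
  have hbdd : BddAbove (Set.range fun B : {B : Set (Fin n × Fin 2 → ℝ) // MeasurableSet B} =>
      ((lawM n x t B).toReal - (UM n B).toReal)) := by
    refine ⟨(lawM n x t Set.univ).toReal, ?_⟩
    rintro _ ⟨B, rfl⟩
    have h1 : (lawM n x t B).toReal ≤ (lawM n x t Set.univ).toReal :=
      ENNReal.toReal_mono (measure_ne_top _ _) (measure_mono (Set.subset_univ _))
    have h2 : 0 ≤ (UM n B).toReal := ENNReal.toReal_nonneg
    dsimp only
    linarith
  have hle := le_ciSup hbdd ⟨A, hA⟩
  refine le_trans ?_ hle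
  simp only [hU, ENNReal.toReal_zero, sub_zero]
  refine ENNReal.toReal_mono (measure_ne_top _ _) ?_
  rw [lawM, Measure.map_apply hmeas hA]
  refine measure_mono ?_
  rintro ω ⟨i, hi⟩
  refine Set.mem_iUnion.2 ⟨i, foldM_coord n i _ ?_ x⟩
  intro u hu
  obtain ⟨s, rfl⟩ := (List.mem_ofFn' _ _).1 hu
  exact hi s

end
end

section
/- Let n > 4 and ε > 0 satisfy n/log n > 3(1+2ε)(1/2+2ε)/ε. Let E_1, E_2, … be i.i.d. uniformly random unordered pairs of distinct elements of {1,…,n}, and let τ be the smallest t such that the graph with vertex set {1,…,n} and edge set {E_1,…,E_t} is connected. Then P[τ > (1/2 + 2ε)·n·log n] ≤ 2·n^{−ε}. -/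
open MeasureTheory

noncomputable section

/-- Pairs with both ends in `S` or both outside `S`. -/
def ncr {n : ℕ} (S : Finset (Fin n)) : Finset (Fin n × Fin n) :=
  Finset.univ.filter fun p => (p.1 ∈ S ↔ p.2 ∈ S)

lemma two_card_pairsF (n : ℕ) : 2 * (pairsF n).card = n * (n - 1) := by
  have h1 : (Finset.univ.offDiag : Finset (Fin n × Fin n)).card = n * (n - 1) := by
    rw [Finset.offDiag_card]; simp [Nat.mul_sub]
  have h2 : (Finset.univ.offDiag : Finset (Fin n × Fin n))
      = pairsF n ∪ (pairsF n).map (Equiv.prodComm _ _).toEmbedding := by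
    ext ⟨a, b⟩
    simp [pairsF]
  rw [← h1, h2, Finset.card_union_of_disjoint, Finset.card_map, two_mul]
  rw [Finset.disjoint_left]
  rintro ⟨a, b⟩
  simp [pairsF]
  omega

lemma cross_card {n : ℕ} (S : Finset (Fin n)) :
    S.card * (n - S.card) ≤ ((pairsF n).filter fun p => p ∉ ncr S).card := by
  have h1 : (S ×ˢ Sᶜ).card = S.card * (n - S.card) := by
    rw [Finset.card_product, Finset.card_compl, Fintype.card_fin]
  rw [← h1]
  apply Finset.card_le_card_of_injOn (fun p => (min p.1 p.2, max p.1 p.2))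
  · rintro ⟨a, b⟩ hab
    simp only [Finset.coe_product, Set.mem_prod, Finset.mem_coe, Finset.mem_compl] at hab
    have hne : a ≠ b := by rintro rfl; exact hab.2 hab.1
    rcases lt_or_gt_of_ne hne with h | h
    · simp [pairsF, ncr, min_eq_left h.le, max_eq_right h.le, h, hab.1, hab.2]
    · simp [pairsF, ncr, min_eq_right h.le, max_eq_left h.le, h, hab.1, hab.2]
  · rintro ⟨a, b⟩ hab ⟨c, d⟩ hcd heq
    simp only [Finset.coe_product, Set.mem_prod, Finset.mem_coe, Finset.mem_compl] at hab hcd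
    simp only [Prod.mk.injEq] at heq ⊢
    have : (a = c ∧ b = d) ∨ (a = d ∧ b = c) := by
      rcases le_total a b with h | h <;> rcases le_total c d with h' | h' <;>
        simp [h, h'] at heq <;> tauto
    rcases this with h | ⟨rfl, rfl⟩
    · exact h
    · exact absurd hab.1 hcd.2

lemma unifOn_apply {α : Type*} [MeasurableSpace α] [MeasurableSingletonClass α] [Countable α]
    [DecidableEq α] (s A : Finset α) :
    unifOn s (A : Set α) = (s.card : ENNReal)⁻¹ * ((s.filter (· ∈ A)).card : ENNReal) := by
  classical
  simp only [unifOn, Measure.smul_apply, Measure.finsetSum_apply, smul_eq_mul]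
  congr 1
  rw [Finset.card_filter]
  push_cast
  apply Finset.sum_congr rfl
  intro a _
  rw [Measure.dirac_apply' _ (Set.to_countable _).measurableSet]
  simp [Set.indicator]

instance unifOn_finite_s4 {α : Type*} [MeasurableSpace α] (s : Finset α) :
    IsFiniteMeasure (unifOn s) := by
  constructor
  simp only [unifOn, Measure.smul_apply, Measure.finsetSum_apply, smul_eq_mul]
  simp
  by_cases h : s.card = 0
  · simp [h]
  · apply ENNReal.mul_lt_top
    · simp [ENNReal.inv_lt_top]; 
      exact Finset.nonempty_iff_ne_empty.2 (by simpa using h)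
    · simp

lemma unif_ncr_le {n : ℕ} (hn : 2 ≤ n) (S : Finset (Fin n)) :
    unifOn (pairsF n) (ncr S : Set (Fin n × Fin n)) ≤
      ENNReal.ofReal (1 - 2 * S.card * (n - S.card) / (n * (n - 1))) := by
  rw [unifOn_apply]
  have h1 := two_card_pairsF n
  have h2 := cross_card S
  have h3 := Finset.card_filter_add_card_filter_not (s := pairsF n) (fun p => p ∈ ncr S)
  have hS : S.card ≤ n := by simpa using Finset.card_le_univ S
  set m := (pairsF n).card
  set x := ((pairsF n).filter (· ∈ ncr S)).card
  have hnR : (2:ℝ) ≤ n := by exact_mod_cast hn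
  have h1R : 2 * (m:ℝ) = n * (n - 1) := by
    have : ((2 * m : ℕ) : ℝ) = ((n * (n-1) : ℕ) : ℝ) := by rw [h1]
    push_cast [Nat.cast_sub (show 1 ≤ n by omega)] at this
    exact this
  have h2R : (S.card : ℝ) * (n - S.card) + x ≤ m := by
    have : S.card * (n - S.card) + x ≤ m := by omega
    have : ((S.card * (n - S.card) + x : ℕ) : ℝ) ≤ m := by exact_mod_cast this
    push_cast [Nat.cast_sub hS] at this
    exact this
  have hm : (0:ℝ) < m := by nlinarith
  have hm0 : (m : ENNReal) = ENNReal.ofReal m := by simp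
  have hx0 : (x : ENNReal) = ENNReal.ofReal x := by simp
  rw [hm0, hx0, ← ENNReal.ofReal_inv_of_pos hm, ← ENNReal.ofReal_mul (by positivity)]
  apply ENNReal.ofReal_le_ofReal
  rw [← h1R]
  have : 1 - 2 * (S.card:ℝ) * (n - S.card) / (2 * m) = (m - S.card * (n - S.card)) / m := by
    field_simp
  rw [this, inv_mul_eq_div]
  gcongr
  linarith

lemma exists_cut {n : ℕ} (hn : 0 < n) (G : SimpleGraph (Fin n)) (h : ¬ G.Connected) :
    ∃ S : Finset (Fin n), S.card ∈ Finset.Icc 1 (n / 2) ∧ ∀ a b, G.Adj a b → (a ∈ S ↔ b ∈ S) := by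
  classical
  have : Nonempty (Fin n) := ⟨⟨0, hn⟩⟩
  have : ¬ G.Preconnected := fun hp => h ⟨hp⟩
  unfold SimpleGraph.Preconnected at this
  push Not at this
  obtain ⟨u, v, huv⟩ := this
  set S : Finset (Fin n) := Finset.univ.filter fun w => G.Reachable u w with hS
  have hu : u ∈ S := by simp [hS]
  have hv : v ∈ Sᶜ := by simp [hS, huv]
  have hadj : ∀ a b, G.Adj a b → (a ∈ S ↔ b ∈ S) := by
    intro a b hab
    simp only [hS, Finset.mem_filter, Finset.mem_univ, true_and]
    exact ⟨fun h => h.trans hab.reachable, fun h => h.trans hab.symm.reachable⟩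
  have h1 : 0 < S.card := Finset.card_pos.2 ⟨u, hu⟩
  have h2 : 0 < Sᶜ.card := Finset.card_pos.2 ⟨v, hv⟩
  have h3 : S.card + Sᶜ.card = n := by simpa using Finset.card_add_card_compl S
  by_cases hc : S.card ≤ n / 2
  · exact ⟨S, Finset.mem_Icc.2 ⟨h1, hc⟩, hadj⟩
  · refine ⟨Sᶜ, Finset.mem_Icc.2 ⟨h2, by omega⟩, fun a b hab => ?_⟩
    simp only [Finset.mem_compl, hadj a b hab]

lemma measure_le_sum (n : ℕ) (hn : 4 < n) (T : ℕ) :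
    (Measure.pi fun _ : Fin T => unifOn (pairsF n))
        {ω | ¬ (SimpleGraph.fromRel fun a b => ∃ s, ω s = (a, b) ∨ ω s = (b, a)).Connected} ≤
      ∑ k ∈ Finset.Icc 1 (n / 2), (n.choose k : ENNReal) *
        ENNReal.ofReal (1 - 2 * k * (n - k) / (n * (n - 1))) ^ T := by
  classical
  have hsub : {ω : Fin T → Fin n × Fin n |
      ¬ (SimpleGraph.fromRel fun a b => ∃ s, ω s = (a, b) ∨ ω s = (b, a)).Connected} ⊆
      ⋃ k ∈ Finset.Icc 1 (n / 2), ⋃ S ∈ Finset.powersetCard k (Finset.univ : Finset (Fin n)),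
        Set.pi Set.univ fun _ : Fin T => (ncr S : Set (Fin n × Fin n)) := by
    intro ω hω
    obtain ⟨S, hS, hadj⟩ := exists_cut (by omega) _ hω
    simp only [Set.mem_iUnion]
    refine ⟨S.card, hS, S, by simp [Finset.mem_powersetCard], ?_⟩
    intro s _
    simp only [ncr, Finset.coe_filter, Finset.mem_univ, true_and, Set.mem_ofPred_eq]
    by_cases hne : (ω s).1 = (ω s).2
    · rw [hne]
    · apply hadj
      rw [SimpleGraph.fromRel_adj]
      exact ⟨hne, Or.inl ⟨s, Or.inl rfl⟩⟩
  refine (measure_mono hsub).trans ((measure_biUnion_finset_le _ _).trans ?_)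
  apply Finset.sum_le_sum
  intro k _
  refine (measure_biUnion_finset_le _ _).trans ?_
  have : ∀ S ∈ Finset.powersetCard k (Finset.univ : Finset (Fin n)),
      (Measure.pi fun _ : Fin T => unifOn (pairsF n))
        (Set.pi Set.univ fun _ : Fin T => (ncr S : Set (Fin n × Fin n))) ≤
        ENNReal.ofReal (1 - 2 * k * (n - k) / (n * (n - 1))) ^ T := by
    intro S hS
    rw [Measure.pi_pi]
    simp only [Finset.prod_const, Finset.card_univ, Fintype.card_fin]
    have hk := (Finset.mem_powersetCard.1 hS).2
    have := unif_ncr_le (by omega : 2 ≤ n) S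
    rw [hk] at this
    gcongr
  refine (Finset.sum_le_sum this).trans ?_
  simp [Finset.card_powersetCard]

lemma size_bounds (n : ℕ) (hn : 4 < n) (ε : ℝ) (hε : 0 < ε)
    (h : 3 * (1 + 2 * ε) * (1 / 2 + 2 * ε) / ε < (n : ℝ) / Real.log n) :
    (72 : ℝ) ≤ n ∧ (4.158 : ℝ) ≤ Real.log n ∧ 17.4 * Real.log n ≤ n ∧
      1.5 * Real.log n * (1 + 2 * ε) * (1 + 4 * ε) ≤ ε * n := by
  have hnR : (5:ℝ) ≤ n := by exact_mod_cast hn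
  have hl2 := Real.log_two_gt_d9
  have key : ∀ (j : ℕ) (x : ℝ), 0 < x → x ≤ n → 2 ^ j ≤ x ^ 2 → j * 0.693147 ≤ 2 * Real.log n := by
    intro j x hx hxn hj
    have h1 : Real.log (2 ^ j) ≤ Real.log (x ^ 2) := Real.log_le_log (by positivity) hj
    rw [Real.log_pow, Real.log_pow] at h1
    have h2 : Real.log x ≤ Real.log n := Real.log_le_log hx hxn
    have h3 : (j:ℝ) * 0.693147 ≤ j * Real.log 2 := by gcongr; linarith
    push_cast at h1
    linarith
  have k1 := key 4 5 (by norm_num) hnR (by norm_num)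
  norm_num at k1
  have hL : 0 < Real.log n := by linarith
  have hmain : 1.5 * Real.log n * (1 + 2 * ε) * (1 + 4 * ε) ≤ ε * n := by
    rw [div_lt_div_iff₀ hε hL] at h
    nlinarith
  have h174 : 17.4 * Real.log n ≤ n := by
    have h0 : 17.4 * ε ≤ 1.5 * (1 + 2 * ε) * (1 + 4 * ε) := by
      nlinarith [sq_nonneg (ε - 0.35)]
    have h1 : 17.4 * ε * Real.log n ≤ 1.5 * (1 + 2 * ε) * (1 + 4 * ε) * Real.log n := by gcongr
    have h2 : ε * (17.4 * Real.log n) ≤ ε * n := by linarith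
    exact le_of_mul_le_mul_left h2 hε
  have k2 := key 9 23 (by norm_num) (by linarith) (by norm_num)
  norm_num at k2
  have k3 := key 11 46 (by norm_num) (by linarith) (by norm_num)
  norm_num at k3
  have k4 := key 12 64 (by norm_num) (by linarith) (by norm_num)
  norm_num at k4
  refine ⟨by linarith, by linarith, h174, hmain⟩

/-- Basic bound on each term. -/
lemma term_bound (n k T : ℕ) (L ε : ℝ) (hk : 1 ≤ k) (hkn : 2 * (k:ℝ) ≤ n) (hn : (72:ℝ) ≤ n)
    (hLdef : L = Real.log n) (hL : 4.158 ≤ L) (hε : 0 < ε)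
    (hm : 1.5 * L * (1 + 2 * ε) * (1 + 4 * ε) ≤ ε * n)
    (hT : (1 / 2 + 2 * ε) * n * L - 1 ≤ T) :
    (n.choose k : ℝ) * (1 - 2 * k * (n - k) / (n * (n - 1))) ^ T ≤
      (n:ℝ) ^ (-ε) * ((1 / (k.factorial : ℝ)) *
        Real.exp (k * L * ((k - 1) / (n - 1) - 0.9 * ε))) := by
  have hk1 : (1:ℝ) ≤ k := by exact_mod_cast hk
  have hn0 : (0:ℝ) < n := by linarith
  have hn1 : (0:ℝ) < n - 1 := by linarith
  set q : ℝ := 2 * k * (n - k) / (n * (n - 1)) with hq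
  set y : ℝ := ((k:ℝ) - 1) / (n - 1) with hy
  have hy0 : 0 ≤ y := div_nonneg (by linarith) hn1.le
  have hyh : y ≤ 1 / 2 := by rw [hy, div_le_div_iff₀ hn1 (by norm_num)]; linarith
  have hqy : q = 2 * k / n * (1 - y) := by
    rw [hq, hy]; field_simp; ring
  have hq1 : q ≤ 1 := by
    have : 2 * k / n ≤ (1:ℝ) := by rw [div_le_one hn0]; exact hkn
    rw [hqy]; 
    have h0 : 0 ≤ 2 * k / (n:ℝ) := by positivity
    nlinarith
  have hqk : q ≤ 2 * k / n := by
    have h0 : 0 ≤ 2 * k / (n:ℝ) := by positivity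
    rw [hqy]; nlinarith
  have hq0 : 0 ≤ q := by
    rw [hqy]; apply mul_nonneg (by positivity); linarith
  have hpow : (1 - q) ^ T ≤ Real.exp (-(q * T)) := by
    have : 1 - q ≤ Real.exp (-q) := by have := Real.add_one_le_exp (-q); linarith
    calc (1 - q) ^ T ≤ (Real.exp (-q)) ^ T := pow_le_pow_left₀ (by linarith) this T
      _ = _ := by rw [← Real.exp_nat_mul]; congr 1; ring
  have hch : (n.choose k : ℝ) ≤ (1 / (k.factorial : ℝ)) * Real.exp (k * L) := by
    have h1 := Nat.choose_le_pow_div (α := ℝ) k n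
    have h2 : Real.exp (k * L) = (n:ℝ) ^ k := by
      rw [Real.exp_nat_mul, hLdef, Real.exp_log hn0]
    rw [h2]
    refine h1.trans (le_of_eq ?_)
    ring
  have hrp : (n:ℝ) ^ (-ε) = Real.exp (-ε * L) := by
    rw [Real.rpow_def_of_pos hn0, ← hLdef]; congr 1; ring
  have hqT : 2 * k / n * (1 - y) * ((1 / 2 + 2 * ε) * n * L) - 2 * k / n ≤ q * T := by
    have : q * ((1 / 2 + 2 * ε) * n * L - 1) ≤ q * T := by gcongr
    have h2 : q * ((1 / 2 + 2 * ε) * n * L) = 2 * k / n * (1 - y) * ((1 / 2 + 2 * ε) * n * L) := by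
      rw [hqy]
    linarith
  have hqT2 : 2 * k / n * (1 - y) * ((1 / 2 + 2 * ε) * n * L)
      = k * L * (1 - y) * (1 + 4 * ε) := by
    field_simp; ring
  have h2n : 2 * k / n ≤ k * L * (0.1 * ε) := by
    rw [div_le_iff₀ hn0]
    have h1 : 1.5 * L ≤ ε * n := by
      have : 0 ≤ L * ε := by positivity
      nlinarith [mul_nonneg this hε.le]
    have h3 : 20 ≤ L * (ε * n) := by nlinarith
    nlinarith
  have hexp : k * L + -(q * T) ≤ -ε * L + k * L * (y - 0.9 * ε) := by
    have hkL : 0 ≤ (k:ℝ) * L := by positivity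
    have e1 : ε * L ≤ k * L * ε := by
      have : 0 ≤ L * ε := by positivity
      nlinarith
    have e2 : 0 ≤ k * L * ε * (1 - 2 * y) := by
      apply mul_nonneg (by positivity); linarith
    rw [hqT2] at hqT
    nlinarith
  calc (n.choose k : ℝ) * (1 - q) ^ T
      ≤ ((1 / (k.factorial : ℝ)) * Real.exp (k * L)) * Real.exp (-(q * T)) := by
        apply mul_le_mul hch hpow (pow_nonneg (by linarith) _) (by positivity)
    _ = (1 / (k.factorial : ℝ)) * Real.exp (k * L + -(q * T)) := by rw [Real.exp_add]; ring
    _ ≤ (1 / (k.factorial : ℝ)) * Real.exp (-ε * L + k * L * (y - 0.9 * ε)) := by gcongr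
    _ = _ := by rw [Real.exp_add, hrp]; ring

lemma small_term (n k : ℕ) (L ε : ℝ) (hk : 1 ≤ k) (hk6 : k ≤ 6) (hn : (72:ℝ) ≤ n)
    (hL : 4.158 ≤ L) (hε : 0 < ε)
    (hm : 1.5 * L * (1 + 2 * ε) * (1 + 4 * ε) ≤ ε * n) :
    (1 / (k.factorial : ℝ)) * Real.exp (k * L * ((k - 1) / (n - 1) - 0.9 * ε))
      ≤ 1 / (k.factorial : ℝ) := by
  have hk6R : (k:ℝ) ≤ 6 := by exact_mod_cast hk6
  have h1 : 1.5 * L ≤ ε * n := by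
    have : 0 ≤ L * ε := by positivity
    nlinarith [mul_nonneg this hε.le]
  have h2 : ((k:ℝ) - 1) / (n - 1) ≤ 0.9 * ε := by
    rw [div_le_iff₀ (by linarith)]
    have h3 : 5.6 ≤ 0.9 * (ε * n) := by linarith
    have h4 : ε * 72 ≤ ε * n := by gcongr
    have : 0.9 * ε * (n - 1) = 0.9 * (ε * n) - 0.9 * ε := by ring
    rw [this]
    linarith
  apply mul_le_of_le_one_right (by positivity)
  rw [Real.exp_le_one_iff]
  apply mul_nonpos_of_nonneg_of_nonpos (by positivity)
  linarith

lemma large_term (n k : ℕ) (L ε : ℝ) (hk : 7 ≤ k) (hkn : 2 * (k:ℝ) ≤ n) (hn : (72:ℝ) ≤ n)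
    (hLdef : L = Real.log n) (hL : 4.158 ≤ L) (hε : 0 < ε) (hLn : 17.4 * L ≤ n) :
    (1 / (k.factorial : ℝ)) * Real.exp (k * L * ((k - 1) / (n - 1) - 0.9 * ε))
      ≤ 0.65 ^ k := by
  have hkR : (7:ℝ) ≤ k := by exact_mod_cast hk
  have hn0 : (0:ℝ) < n := by linarith
  have hk0 : (0:ℝ) < k := by linarith
  have he := Real.exp_one_lt_d9
  -- factorial bound
  have hf : 1 / (k.factorial : ℝ) ≤ (Real.exp 1 / k) ^ k := by
    have h1 := Real.pow_div_factorial_le_exp (k:ℝ) hk0.le k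
    have h2 : Real.exp (k:ℝ) = Real.exp 1 ^ k := by rw [← Real.exp_nat_mul]; simp
    rw [h2] at h1
    rw [div_pow, le_div_iff₀ (by positivity)]
    refine le_trans (le_of_eq ?_) h1
    ring
  have hy : ((k:ℝ) - 1) / (n - 1) - 0.9 * ε ≤ k / n := by
    have : ((k:ℝ) - 1) / (n - 1) ≤ k / n := by
      rw [div_le_div_iff₀ (by linarith) hn0]; nlinarith
    linarith
  have hconv : Real.exp (L * (k / n)) * Real.exp 1 ≤ 0.65 * k := by
    -- chord bound on [7, n/2]
    set t : ℝ := (k - 7) / (n / 2 - 7) with ht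
    have hd : (0:ℝ) < n / 2 - 7 := by linarith
    have ht0 : 0 ≤ t := div_nonneg (by linarith) hd.le
    have ht1 : t ≤ 1 := by rw [ht, div_le_one hd]; linarith
    have hkt : (k:ℝ) = (1 - t) * 7 + t * (n / 2) := by
      have h3 : t * (n / 2 - 7) = k - 7 := div_mul_cancel₀ _ hd.ne'
      linarith
    have hc := convexOn_exp.2 (Set.mem_univ (L * (7 / n))) (Set.mem_univ (L / 2))
      (by linarith : 0 ≤ 1 - t) ht0 (by ring)
    simp only [smul_eq_mul] at hc
    have hLk : (1 - t) * (L * (7 / n)) + t * (L / 2) = L * (k / n) := by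
      rw [hkt]; field_simp
    rw [hLk] at hc
    have e1 : Real.exp (L * (7 / n)) * Real.exp 1 ≤ 0.65 * 7 := by
      rw [← Real.exp_add]
      have : L * (7 / n) + 1 ≤ 1.5 := by
        have : L * (7 / n) ≤ 0.5 := by
          rw [← mul_div_assoc, div_le_iff₀ hn0]; linarith
        linarith
      have h5 : Real.exp (1.5:ℝ) ≤ 4.55 := by
        have h6 : Real.exp (1.5:ℝ) ^ 2 = Real.exp 1 ^ 3 := by
          rw [← Real.exp_nat_mul, ← Real.exp_nat_mul]; norm_num
        have h7 : Real.exp 1 ^ 3 ≤ 2.7182818286 ^ 3 := by gcongr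
        apply (sq_le_sq₀ (by positivity) (by norm_num)).1
        rw [h6]; refine h7.trans ?_; norm_num
      have := (Real.exp_le_exp.2 this).trans h5
      linarith
    have e2 : Real.exp (L / 2) * Real.exp 1 ≤ 0.65 * (n / 2) := by
      have h6 : Real.exp (L / 2) ^ 2 = n := by
        rw [← Real.exp_nat_mul, ← Real.exp_log hn0, ← hLdef]; congr 1; push_cast; ring
      set z := Real.exp (L / 2)
      have hz : 0 < z := Real.exp_pos _
      have hz8 : 8.4 ≤ z := by nlinarith
      rw [← h6]
      nlinarith
    have e0 := Real.exp_pos 1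
    calc _ ≤ ((1 - t) * Real.exp (L * (7 / n)) + t * Real.exp (L / 2)) * Real.exp 1 := by gcongr
      _ = (1 - t) * (Real.exp (L * (7 / n)) * Real.exp 1) + t * (Real.exp (L / 2) * Real.exp 1) := by
          ring
      _ ≤ (1 - t) * (0.65 * 7) + t * (0.65 * (n / 2)) := by
          have : 0 ≤ 1 - t := by linarith
          gcongr
      _ = 0.65 * k := by rw [hkt]; ring
  have hL0 : 0 ≤ L := by linarith
  calc (1 / (k.factorial : ℝ)) * Real.exp (k * L * ((k - 1) / (n - 1) - 0.9 * ε))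
      ≤ (Real.exp 1 / k) ^ k * Real.exp (k * L * (k / n)) := by gcongr
    _ = (Real.exp (L * (k / n)) * Real.exp 1 / k) ^ k := by
        rw [mul_assoc (k:ℝ), Real.exp_nat_mul, ← mul_pow]; congr 1; ring
    _ ≤ 0.65 ^ k := by
        gcongr
        rw [div_le_iff₀ hk0]; exact hconv

lemma sum_bound (N : ℕ) (hN : 7 ≤ N) (a : ℕ → ℝ)
    (h1 : ∀ k, 1 ≤ k → k ≤ 6 → a k ≤ 1 / (k.factorial : ℝ))
    (h2 : ∀ k, 7 ≤ k → k ≤ N → a k ≤ 0.65 ^ k) :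
    ∑ k ∈ Finset.Icc 1 N, a k ≤ 2 := by
  have hs : ∀ M, 6 ≤ M → M ≤ N →
      ∑ k ∈ Finset.Icc 1 M, a k ≤ 1.86 - 0.65 ^ (M + 1) / 0.35 := by
    intro M hM
    induction M, hM using Nat.le_induction with
    | base =>
      intro _
      have := h1 1; have := h1 2; have := h1 3; have := h1 4; have := h1 5; have := h1 6
      norm_num [Nat.factorial] at *
      simp only [Finset.sum_Icc_succ_top (by norm_num : 1 ≤ 5 + 1),
        Finset.sum_Icc_succ_top (by norm_num : 1 ≤ 4 + 1),
        Finset.sum_Icc_succ_top (by norm_num : 1 ≤ 3 + 1),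
        Finset.sum_Icc_succ_top (by norm_num : 1 ≤ 2 + 1),
        Finset.sum_Icc_succ_top (by norm_num : 1 ≤ 1 + 1), Finset.Icc_self, Finset.sum_singleton]
      norm_num
      linarith
    | succ M hM ih =>
      intro hMN
      rw [Finset.sum_Icc_succ_top (by omega)]
      have i1 := ih (by omega)
      have i2 := h2 (M + 1) (by omega) hMN
      have : (0.65:ℝ) ^ (M + 1 + 1) = 0.65 * 0.65 ^ (M + 1) := by ring
      rw [this]
      generalize (0.65:ℝ) ^ (M + 1) = x at *
      norm_num at *
      linarith
  have := hs N (by omega) le_rfl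
  have h3 : (0:ℝ) ≤ 0.65 ^ (N + 1) / 0.35 := by positivity
  linarith

/-- Connectivity time for the random graph process: if `E_1, E_2, …` are i.i.d. uniform
unordered pairs of distinct vertices, the probability that the graph made of the first
`⌊(1/2 + 2ε) n log n⌋` edges is still disconnected is at most `2 n^{-ε}`. -/
theorem random_graph_connectivity_time
    (n : ℕ) (hn : 4 < n) (ε : ℝ) (hε : 0 < ε)
    (h : 3 * (1 + 2 * ε) * (1 / 2 + 2 * ε) / ε < (n : ℝ) / Real.log n) :
    (Measure.pi fun _ : Fin ⌊(1 / 2 + 2 * ε) * n * Real.log n⌋₊ => unifOn (pairsF n))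
        {ω | ¬ (SimpleGraph.fromRel fun a b => ∃ s, ω s = (a, b) ∨ ω s = (b, a)).Connected} ≤
      ENNReal.ofReal (2 * (n : ℝ) ^ (-ε)) := by
  obtain ⟨hn72, hL, hLn, hm⟩ := size_bounds n hn ε hε h
  refine (measure_le_sum n hn _).trans ?_
  have hT := (Nat.sub_one_lt_floor ((1 / 2 + 2 * ε) * n * Real.log n)).le
  set T := ⌊(1 / 2 + 2 * ε) * n * Real.log n⌋₊
  have hkn : ∀ k ∈ Finset.Icc 1 (n / 2), 2 * (k:ℝ) ≤ n := by
    intro k hk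
    have : 2 * k ≤ n := by have := (Finset.mem_Icc.1 hk).2; omega
    exact_mod_cast this
  have hq : ∀ k ∈ Finset.Icc 1 (n / 2), (0:ℝ) ≤ 1 - 2 * k * (n - k) / (n * (n - 1)) := by
    intro k hk
    have h1 := hkn k hk
    have h2 : (1:ℝ) ≤ k := by exact_mod_cast (Finset.mem_Icc.1 hk).1
    rw [sub_nonneg, div_le_one (by nlinarith)]
    nlinarith
  have hconv : ∑ k ∈ Finset.Icc 1 (n / 2), (n.choose k : ENNReal) *
        ENNReal.ofReal (1 - 2 * k * (n - k) / (n * (n - 1))) ^ T =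
      ENNReal.ofReal (∑ k ∈ Finset.Icc 1 (n / 2), (n.choose k : ℝ) *
        (1 - 2 * k * (n - k) / (n * (n - 1))) ^ T) := by
    rw [ENNReal.ofReal_sum_of_nonneg]
    · apply Finset.sum_congr rfl
      intro k hk
      rw [ENNReal.ofReal_mul (by positivity), ENNReal.ofReal_pow (hq k hk), ENNReal.ofReal_natCast]
    · intro k hk
      exact mul_nonneg (by positivity) (pow_nonneg (hq k hk) _)
  rw [hconv]
  apply ENNReal.ofReal_le_ofReal
  have hb := fun k hk => term_bound n k T (Real.log n) ε (Finset.mem_Icc.1 hk).1 (hkn k hk) hn72 rfl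
    hL hε hm hT
  refine (Finset.sum_le_sum hb).trans ?_
  rw [← Finset.mul_sum, mul_comm]
  have hn7 : 72 ≤ n := by exact_mod_cast hn72
  gcongr
  apply sum_bound _ (by omega)
  · intro k h1 h6
    exact small_term n k _ ε h1 h6 hn72 hL hε hm
  · intro k h7 hN
    exact large_term n k _ ε h7 (hkn k (Finset.mem_Icc.2 ⟨by omega, hN⟩)) hn72 rfl hL hε hLn

end
end
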